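/- arXiv:1911.02297 — 4 statements merged into one kernel-verified Lean document; each statement's English description precedes it below -/
import Mathlib

section
/- Let k ≥ 2, let V be a nonempty finite set, and let μ : (Fin k → V) → ℝ be a weighted k-uniform hypergraph on V with marginals m_i. Let λ_0, …, λ_{k-2} be real numbers with λ_i ≤ 0 for each i, such that for every 0 ≤ i ≤ k-2, every i-face σ : Fin i → V, and every f : V → ℝ: Σ_{u,v∈V} m_{i+2}(σ ⌢ (u,v))·f(u)·f(v) ≥ λ_i · Σ_{v∈V} (Σ_{u∈V} m_{i+2}(σ ⌢ (v,u)))·f(v)². For n ≥ 1, define the n-th tensor power μ_n : (Fin k → (Fin n → V)) → ℝ by μ_n(τ) = Π_{j∈Fin n} μ(fun i ↦ τ(i)(j)). Then every set I ⊆ (Fin n → V) that is independent with respect to μ_n (i.e. μ_n(τ) = 0 whenever the range of τ is contained in I) satisfies Σ_{x∈I} Π_{j∈Fin n} m_1(x(j)) ≤ 1 - 1/((1-λ_0)(1-λ_1)⋯(1-λ_{k-2})). -/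
/-- The `i`-th marginal of a weight function `μ` on `k`-tuples: `marg μ i h σ` is the sum of
`μ` over all extensions of the `i`-tuple `σ` to a `k`-tuple (`σ` occupying the first `i`
coordinates). -/
noncomputable def marg {V : Type*} [Fintype V] {k : ℕ} (μ : (Fin k → V) → ℝ)
    (i : ℕ) (hik : i ≤ k) (σ : Fin i → V) : ℝ :=
  ∑ τ : Fin (k - i) → V,
    μ (fun j => if h : (j : ℕ) < i then σ ⟨j, h⟩ else τ ⟨(j : ℕ) - i, by omega⟩)

/-- The `n`-th tensor power of a weighted `k`-uniform hypergraph `μ` on `V`: the weight of a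
`k`-tuple of vertices of `V^n` is the product over the coordinates `j ∈ Fin n` of the weight
of the `j`-th column. -/
noncomputable def tensorPow {V : Type*} [Fintype V] {k : ℕ} (μ : (Fin k → V) → ℝ)
    (n : ℕ) (τ : Fin k → (Fin n → V)) : ℝ :=
  ∏ j : Fin n, μ (fun i => τ i j)

/-!
Hoffman's argument is applied link by link. In a weighted graph with adjacency matrix `A` and
degree matrix `D`, the condition that the normalized adjacency operator has spectrum at least `l`
reads `Q := A - l D ≥ 0`. Cauchy–Schwarz for `Q`, applied to the constant function and to the
indicator of `I`, bounds the measure of `I` by `(ε - l) / (1 - l)` as soon as each vertex of `I`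
sends at most a fraction `ε` of its degree into `I`. In a hypergraph such an `ε` for the link of
`σ` comes from the bound in the links of the faces `σ ⌢ x` with `x ∈ I`, and the recursion starts
with `ε = 0` at the top dimension because `I` is independent.

The links of a tensor power are tensor products of links. Spectral lower bounds `l ≤ 0` survive
tensor products of graphs with nonnegative weights, because
`(1 - l) (A ⊗ B - l D ⊗ E) = (A - l D) ⊗ (B - l E) + (-l) (D - A) ⊗ (E - B)`
and the Laplacians `D - A`, `E - B` are positive semidefinite.
-/

open Matrix
open scoped Kronecker

theorem sq_dotProduct_mulVec_le {X : Type*} [Fintype X] {Q : Matrix X X ℝ} (hQ : Q.PosSemidef)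
    (f g : X → ℝ) : (f ⬝ᵥ Q *ᵥ g) ^ 2 ≤ (f ⬝ᵥ Q *ᵥ f) * (g ⬝ᵥ Q *ᵥ g) := by
  classical
  have hsymm : LinearMap.IsSymm (Matrix.toBilin' Q) := ⟨fun x y => by
    simp only [toBilin'_apply', RingHom.id_apply]
    rw [dotProduct_mulVec, ← mulVec_transpose, (isHermitian_iff_isSymm.1 hQ.isHermitian).eq,
      dotProduct_comm]⟩
  simpa only [toBilin'_apply'] using
    (Matrix.toBilin' Q).apply_sq_le_of_symm
      (fun x => by simpa [toBilin'_apply'] using hQ.dotProduct_mulVec_nonneg x) hsymm f g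

/-- The diagonal matrix of the vertex degrees of the weighted graph with adjacency matrix `A`. -/
def degreeMatrix {X : Type*} [Fintype X] [DecidableEq X] (A : Matrix X X ℝ) : Matrix X X ℝ :=
  diagonal fun x => ∑ y, A x y

/-- `l` is a lower bound for the spectrum of the normalized adjacency operator `D⁻¹ A` of a
weighted graph. Stating it as positivity of `A - l D` avoids dividing by vanishing degrees;
symmetry of `A` is part of the condition. -/
def IsSpectralLowerBound {X : Type*} [Fintype X] [DecidableEq X] (A : Matrix X X ℝ) (l : ℝ) :
    Prop :=
  (A - l • degreeMatrix A).PosSemidef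

section WeightedGraph

variable {X Y : Type*} [Fintype X] [DecidableEq X] [Fintype Y] [DecidableEq Y]
  {A : Matrix X X ℝ} {B : Matrix Y Y ℝ} {l : ℝ}

theorem isSymm_degreeMatrix (A : Matrix X X ℝ) : (degreeMatrix A).IsSymm :=
  isSymm_diagonal _

theorem degreeMatrix_kronecker (A : Matrix X X ℝ) (B : Matrix Y Y ℝ) :
    degreeMatrix (A ⊗ₖ B) = degreeMatrix A ⊗ₖ degreeMatrix B := by
  simp only [degreeMatrix, diagonal_kronecker_diagonal, kroneckerMap_apply,
    Fintype.sum_prod_type, Finset.sum_mul_sum]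

theorem degreeMatrix_submatrix_equiv (A : Matrix X X ℝ) (e : Y ≃ X) :
    degreeMatrix (A.submatrix e e) = (degreeMatrix A).submatrix e e := by
  simp only [degreeMatrix, submatrix_diagonal_equiv, submatrix_apply, Function.comp_def,
    e.sum_comp (A _)]

theorem dotProduct_sub_smul_degreeMatrix_mulVec (A : Matrix X X ℝ) (l : ℝ) (f g : X → ℝ) :
    f ⬝ᵥ (A - l • degreeMatrix A) *ᵥ g =
      ∑ x, ∑ y, A x y * f x * g y - l * ∑ x, (∑ y, A x y) * (f x * g x) := by
  have hdeg : f ⬝ᵥ degreeMatrix A *ᵥ g = ∑ x, (∑ y, A x y) * (f x * g x) := by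
    simp only [degreeMatrix, dotProduct, mulVec_diagonal, mul_left_comm]
  have hadj : f ⬝ᵥ A *ᵥ g = ∑ x, ∑ y, A x y * f x * g y := by
    simp only [dotProduct, mulVec, Finset.mul_sum, mul_left_comm, mul_assoc]
  rw [sub_mulVec, dotProduct_sub, smul_mulVec, dotProduct_smul, smul_eq_mul, hadj, hdeg]

theorem IsSpectralLowerBound.of_forall_le (hA : A.IsSymm)
    (h : ∀ f : X → ℝ, l * ∑ x, (∑ y, A x y) * f x ^ 2 ≤ ∑ x, ∑ y, A x y * f x * f y) :
    IsSpectralLowerBound A l := by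
  refine PosSemidef.of_dotProduct_mulVec_nonneg ?_ fun f => ?_
  · exact isHermitian_iff_isSymm.2 (hA.sub ((isSymm_degreeMatrix A).smul l))
  · rw [star_trivial, dotProduct_sub_smul_degreeMatrix_mulVec, sub_nonneg]
    simpa only [sq] using h f

theorem IsSpectralLowerBound.isSymm (hA : IsSpectralLowerBound A l) : A.IsSymm := by
  simpa only [sub_add_cancel] using
    (isHermitian_iff_isSymm.1 hA.isHermitian).add ((isSymm_degreeMatrix A).smul l)

theorem posSemidef_degreeMatrix_sub (hA : A.IsSymm) (hnonneg : ∀ x y, 0 ≤ A x y) :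
    (degreeMatrix A - A).PosSemidef := by
  refine PosSemidef.of_dotProduct_mulVec_nonneg ?_ fun f => ?_
  · exact isHermitian_iff_isSymm.2 ((isSymm_degreeMatrix A).sub hA)
  have hswap : ∑ x, ∑ y, A x y * (f y * f y) = ∑ x, ∑ y, A x y * (f x * f x) := by
    rw [Finset.sum_comm]
    simp only [hA.apply]
  have hform : f ⬝ᵥ (degreeMatrix A - A) *ᵥ f = (∑ x, ∑ y, A x y * (f x - f y) ^ 2) / 2 := by
    have hexpand : ∑ x, ∑ y, A x y * (f x - f y) ^ 2 = ∑ x, ∑ y, A x y * (f x * f x) +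
        ∑ x, ∑ y, A x y * (f y * f y) - 2 * ∑ x, ∑ y, A x y * f x * f y := by
      simp only [Finset.mul_sum, ← Finset.sum_add_distrib, ← Finset.sum_sub_distrib]
      congr! 2
      ring
    rw [← neg_sub A, neg_mulVec, dotProduct_neg, ← one_smul ℝ (degreeMatrix A),
      dotProduct_sub_smul_degreeMatrix_mulVec, hexpand, hswap]
    simp only [Finset.sum_mul]
    ring
  rw [star_trivial, hform]
  exact div_nonneg (Finset.sum_nonneg fun x _ => Finset.sum_nonneg fun y _ =>
    mul_nonneg (hnonneg x y) (sq_nonneg _)) zero_le_two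

theorem IsSpectralLowerBound.kronecker (hA : IsSpectralLowerBound A l)
    (hB : IsSpectralLowerBound B l) (hl : l ≤ 0) (hA₀ : ∀ x y, 0 ≤ A x y) (hB₀ : ∀ x y, 0 ≤ B x y) :
    IsSpectralLowerBound (A ⊗ₖ B) l := by
  have hLA := posSemidef_degreeMatrix_sub hA.isSymm hA₀
  have hLB := posSemidef_degreeMatrix_sub hB.isSymm hB₀
  have hdecomp : A ⊗ₖ B - l • degreeMatrix (A ⊗ₖ B) = (1 - l)⁻¹ •
      ((A - l • degreeMatrix A) ⊗ₖ (B - l • degreeMatrix B) +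
        (-l) • ((degreeMatrix A - A) ⊗ₖ (degreeMatrix B - B))) := by
    have : 1 - l ≠ 0 := by linarith
    rw [degreeMatrix_kronecker]
    ext x y
    simp only [Matrix.sub_apply, Matrix.smul_apply, Matrix.add_apply, kroneckerMap_apply,
      smul_eq_mul]
    field_simp
    ring
  rw [IsSpectralLowerBound, hdecomp]
  exact ((PosSemidef.kronecker hA hB).add ((hLA.kronecker hLB).smul (by linarith))).smul
    (inv_nonneg.2 (by linarith))

theorem IsSpectralLowerBound.submatrix_equiv (hA : IsSpectralLowerBound A l) (e : Y ≃ X) :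
    IsSpectralLowerBound (A.submatrix e e) l := by
  rw [IsSpectralLowerBound, degreeMatrix_submatrix_equiv]
  exact hA.submatrix e

theorem IsSpectralLowerBound.sum_degree_le {ε : ℝ} (hA : IsSpectralLowerBound A l)
    (hdeg : ∀ x, 0 ≤ ∑ y, A x y) (hl : l < 1) (hlε : l ≤ ε) {I : Finset X}
    (hI : ∀ x ∈ I, ∑ y ∈ I, A x y ≤ ε * ∑ y, A x y) :
    ∑ x ∈ I, ∑ y, A x y ≤ (ε - l) / (1 - l) * ∑ x, ∑ y, A x y := by
  let g : X → ℝ := fun x => if x ∈ I then 1 else 0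
  set a := ∑ x ∈ I, ∑ y, A x y
  set W := ∑ x, ∑ y, A x y
  have ha : 0 ≤ a := Finset.sum_nonneg fun x _ => hdeg x
  have hW : 0 ≤ W := Finset.sum_nonneg fun x _ => hdeg x
  have hg1 : g ⬝ᵥ (A - l • degreeMatrix A) *ᵥ 1 = (1 - l) * a := by
    rw [dotProduct_sub_smul_degreeMatrix_mulVec, one_sub_mul]
    simp [g, a]
  have h11 : 1 ⬝ᵥ (A - l • degreeMatrix A) *ᵥ 1 = (1 - l) * W := by
    rw [dotProduct_sub_smul_degreeMatrix_mulVec, one_sub_mul]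
    simp [W]
  have hgg : g ⬝ᵥ (A - l • degreeMatrix A) *ᵥ g ≤ (ε - l) * a := by
    have hedges : ∑ x ∈ I, ∑ y ∈ I, A x y ≤ ε * a :=
      (Finset.sum_le_sum hI).trans_eq (Finset.mul_sum ..).symm
    rw [dotProduct_sub_smul_degreeMatrix_mulVec, sub_mul]
    simpa [g, a] using hedges
  have hCS : ((1 - l) * a) ^ 2 ≤ (ε - l) * a * ((1 - l) * W) := by
    rw [← hg1, ← h11]
    exact (sq_dotProduct_mulVec_le hA g 1).trans
      (mul_le_mul_of_nonneg_right hgg (by simpa using hA.dotProduct_mulVec_nonneg 1))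
  have hl' : 0 < 1 - l := sub_pos.2 hl
  rw [div_mul_eq_mul_div, le_div_iff₀ hl']
  obtain ha | ha := ha.eq_or_lt
  · rw [← ha, zero_mul]
    exact mul_nonneg (sub_nonneg.2 hlε) hW
  · refine le_of_mul_le_mul_left ?_ (mul_pos hl' ha)
    linarith

end WeightedGraph

/-- The Kronecker product of a finite sequence of square matrices, with rows and columns indexed by
tuples: the adjacency matrix of the tensor product of the corresponding weighted graphs. -/
def piKronecker {X : Type*} {n : ℕ} (A : Fin n → Matrix X X ℝ) :
    Matrix (Fin n → X) (Fin n → X) ℝ :=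
  of fun x y => ∏ j, A j (x j) (y j)

theorem piKronecker_succ {X : Type*} {n : ℕ} (A : Fin (n + 1) → Matrix X X ℝ) :
    piKronecker A = (A 0 ⊗ₖ piKronecker (Fin.tail A)).submatrix
      (Fin.consEquiv fun _ => X).symm (Fin.consEquiv fun _ => X).symm := by
  ext x y
  simp [piKronecker, Fin.prod_univ_succ, Fin.tail]

theorem piKronecker_nonneg {X : Type*} {n : ℕ} {A : Fin n → Matrix X X ℝ}
    (hA : ∀ j x y, 0 ≤ A j x y) (x y : Fin n → X) : 0 ≤ piKronecker A x y := by
  rw [piKronecker, of_apply]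
  exact Finset.prod_nonneg fun j _ => hA j (x j) (y j)

theorem isSpectralLowerBound_piKronecker {X : Type*} [Fintype X] [DecidableEq X] {l : ℝ}
    {n : ℕ} {A : Fin n → Matrix X X ℝ} (hA : ∀ j, IsSpectralLowerBound (A j) l) (hl : l ≤ 0)
    (hnonneg : ∀ j x y, 0 ≤ A j x y) : IsSpectralLowerBound (piKronecker A) l := by
  induction n with
  | zero =>
    have hpi : piKronecker A = 1 := by
      ext x y
      obtain rfl := Subsingleton.elim x y
      simp [piKronecker]
    have hdeg : degreeMatrix (1 : Matrix (Fin 0 → X) (Fin 0 → X) ℝ) = 1 := by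
      simp [degreeMatrix, one_apply, Subsingleton.elim _ default]
    rw [IsSpectralLowerBound, hpi, hdeg, sub_eq_add_neg, ← neg_smul]
    exact PosSemidef.one.add (PosSemidef.one.smul (neg_nonneg.2 hl))
  | succ n ih =>
    rw [piKronecker_succ]
    have htail : IsSpectralLowerBound (piKronecker (Fin.tail A)) l :=
      ih (fun j => hA j.succ) fun j => hnonneg j.succ
    exact ((hA 0).kronecker htail hl (hnonneg 0)
      (piKronecker_nonneg fun j => hnonneg j.succ)).submatrix_equiv _

theorem forall_castLE_eq_snoc_iff {V : Type*} {k i : ℕ} (hi : i + 1 ≤ k) (τ : Fin k → V)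
    (σ : Fin i → V) (u : V) :
    (∀ j, τ (Fin.castLE hi j) = Fin.snoc (α := fun _ => V) σ u j) ↔
      (∀ j, τ (Fin.castLE (Nat.le_of_succ_le hi) j) = σ j) ∧ τ ⟨i, hi⟩ = u := by
  rw [Fin.forall_fin_succ']
  simp only [Fin.snoc_castSucc, Fin.snoc_last]
  rfl

section Marginals

variable {V : Type*} [Fintype V] {k i : ℕ} {μ : (Fin k → V) → ℝ}

open Classical in
theorem marg_eq_sum_filter (μ : (Fin k → V) → ℝ) (hi : i ≤ k) (σ : Fin i → V) :
    marg μ i hi σ = ∑ τ with ∀ j, τ (Fin.castLE hi j) = σ j, μ τ := by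
  refine Finset.sum_bij' (fun τ _ j => if h : (j : ℕ) < i then σ ⟨j, h⟩ else τ ⟨j - i, by omega⟩)
    (fun τ _ j => τ ⟨j + i, by omega⟩) (by simp) (by simp) (by simp) (fun τ hτ => ?_) (by simp)
  rw [Finset.mem_filter_univ] at hτ
  ext j
  by_cases hj : (j : ℕ) < i
  · simpa [hj] using (hτ ⟨j, hj⟩).symm
  · simp [hj, Nat.sub_add_cancel (not_lt.1 hj)]

theorem marg_nonneg (hμ : ∀ τ, 0 ≤ μ τ) (hi : i ≤ k) (σ : Fin i → V) : 0 ≤ marg μ i hi σ :=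
  Finset.sum_nonneg fun _ _ => hμ _

theorem marg_self (μ : (Fin k → V) → ℝ) (σ : Fin k → V) : marg μ k le_rfl σ = μ σ := by
  classical
  simp [marg_eq_sum_filter, ← funext_iff, Finset.filter_eq']

theorem marg_zero (μ : (Fin k → V) → ℝ) (σ : Fin 0 → V) :
    marg μ 0 (Nat.zero_le k) σ = ∑ τ, μ τ := by
  classical
  simp [marg_eq_sum_filter]

theorem sum_marg_snoc (μ : (Fin k → V) → ℝ) (hi : i + 1 ≤ k) (σ : Fin i → V) :
    ∑ u, marg μ (i + 1) hi (Fin.snoc σ u) = marg μ i (Nat.le_of_succ_le hi) σ := by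
  classical
  simp only [marg_eq_sum_filter, forall_castLE_eq_snoc_iff, ← Finset.filter_filter]
  exact Finset.sum_fiberwise _ _ _

theorem marg_snoc_le (hμ : ∀ τ, 0 ≤ μ τ) (hi : i + 1 ≤ k) (σ : Fin i → V) (u : V) :
    marg μ (i + 1) hi (Fin.snoc σ u) ≤ marg μ i (Nat.le_of_succ_le hi) σ := by
  rw [← sum_marg_snoc μ hi σ]
  exact Finset.single_le_sum (fun v _ => marg_nonneg hμ hi (Fin.snoc σ v)) (Finset.mem_univ u)

theorem marg_snoc_snoc_comm (hμ : ∀ (π : Equiv.Perm (Fin k)) (τ : Fin k → V), μ (τ ∘ π) = μ τ)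
    (hi : i + 2 ≤ k) (σ : Fin i → V) (u v : V) :
    marg μ (i + 2) hi (Fin.snoc (Fin.snoc σ u) v) =
      marg μ (i + 2) hi (Fin.snoc (Fin.snoc σ v) u) := by
  classical
  let π : Equiv.Perm (Fin k) := Equiv.swap ⟨i, by omega⟩ ⟨i + 1, by omega⟩
  have hfix (j : Fin i) : π (Fin.castLE (by omega) j) = Fin.castLE (by omega) j :=
    Equiv.swap_apply_of_ne_of_ne (Fin.ne_of_val_ne (by simp; omega))
      (Fin.ne_of_val_ne (by simp; omega))
  have hfst : π ⟨i, by omega⟩ = ⟨i + 1, by omega⟩ := Equiv.swap_apply_left _ _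
  have hsnd : π ⟨i + 1, by omega⟩ = ⟨i, by omega⟩ := Equiv.swap_apply_right _ _
  simp only [marg_eq_sum_filter, forall_castLE_eq_snoc_iff]
  refine Finset.sum_equiv (π.arrowCongr (Equiv.refl V)).symm (fun τ => ?_) fun τ _ => (hμ π τ).symm
  simpa [hfix, hfst, hsnd] using and_right_comm

theorem marg_tensorPow (μ : (Fin k → V) → ℝ) (n : ℕ) (hi : i ≤ k) (σ : Fin i → Fin n → V) :
    marg (tensorPow μ n) i hi σ = ∏ j, marg μ i hi (Function.eval j ∘ σ) := by
  simp only [marg, tensorPow, Fintype.prod_sum]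
  refine Fintype.sum_equiv (Equiv.piComm _) _ _ fun τ => Finset.prod_congr rfl fun j _ => ?_
  congr! 2 with l
  split_ifs <;> rfl

theorem tensorPow_nonneg (hμ : ∀ τ, 0 ≤ μ τ) (n : ℕ) (τ : Fin k → Fin n → V) :
    0 ≤ tensorPow μ n τ :=
  Finset.prod_nonneg fun _ _ => hμ _

theorem sum_tensorPow (μ : (Fin k → V) → ℝ) (n : ℕ) :
    ∑ τ, tensorPow μ n τ = (∑ τ, μ τ) ^ n := by
  rw [← marg_zero _ Fin.elim0, marg_tensorPow]
  simp [marg_zero]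

end Marginals

/-- The adjacency matrix of the weighted graph underlying the link of `σ`. It is not normalized by
the weight of `σ`, so it makes sense for every tuple `σ` and vanishes when `σ` is not a face. -/
noncomputable def linkMatrix {V : Type*} [Fintype V] {k i : ℕ} (μ : (Fin k → V) → ℝ)
    (hi : i + 2 ≤ k) (σ : Fin i → V) : Matrix V V ℝ :=
  of fun u v => marg μ (i + 2) hi (Fin.snoc (Fin.snoc σ u) v)

/-- `lam i` bounds from below the spectrum of the link of every `i`-tuple, for `0 ≤ i ≤ k - 2`.
Tuples that are not faces have zero link matrix, so including them costs nothing. -/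
def HasLinkSpectralBounds {V : Type*} [Fintype V] [DecidableEq V] {k : ℕ} (μ : (Fin k → V) → ℝ)
    (lam : ℕ → ℝ) : Prop :=
  ∀ (i : ℕ) (hi : i + 2 ≤ k) (σ : Fin i → V), IsSpectralLowerBound (linkMatrix μ hi σ) (lam i)

/-- `I` is an independent set of the weighted hypergraph `μ`: no edge is contained in `I`. -/
def IsIndependent {V : Type*} {k : ℕ} (μ : (Fin k → V) → ℝ) (I : Finset V) : Prop :=
  ∀ τ : Fin k → V, (∀ i, τ i ∈ I) → μ τ = 0

section Links

variable {V : Type*} [Fintype V] {k i : ℕ} {μ : (Fin k → V) → ℝ} {lam : ℕ → ℝ}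

theorem linkMatrix_nonneg (hμ : ∀ τ, 0 ≤ μ τ) (hi : i + 2 ≤ k) (σ : Fin i → V) (u v : V) :
    0 ≤ linkMatrix μ hi σ u v :=
  marg_nonneg hμ hi _

theorem sum_linkMatrix (μ : (Fin k → V) → ℝ) (hi : i + 2 ≤ k) (σ : Fin i → V) (u : V) :
    ∑ v, linkMatrix μ hi σ u v = marg μ (i + 1) (Nat.le_of_succ_le hi) (Fin.snoc σ u) :=
  sum_marg_snoc μ hi _

theorem isSymm_linkMatrix (hμ : ∀ (π : Equiv.Perm (Fin k)) (τ : Fin k → V), μ (τ ∘ π) = μ τ)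
    (hi : i + 2 ≤ k) (σ : Fin i → V) : (linkMatrix μ hi σ).IsSymm :=
  IsSymm.ext fun u v => marg_snoc_snoc_comm hμ hi σ v u

theorem linkMatrix_eq_zero (hμ : ∀ τ, 0 ≤ μ τ) (hi : i + 2 ≤ k) {σ : Fin i → V}
    (hσ : marg μ i (by omega) σ = 0) : linkMatrix μ hi σ = 0 := by
  ext u v
  refine le_antisymm ?_ (linkMatrix_nonneg hμ hi σ u v)
  calc marg μ (i + 2) hi (Fin.snoc (Fin.snoc σ u) v)
      ≤ marg μ (i + 1) (by omega) (Fin.snoc σ u) := marg_snoc_le hμ hi _ v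
    _ ≤ marg μ i (by omega) σ := marg_snoc_le hμ _ σ u
    _ = 0 := hσ

theorem linkMatrix_tensorPow (μ : (Fin k → V) → ℝ) (n : ℕ) (hi : i + 2 ≤ k)
    (σ : Fin i → Fin n → V) :
    linkMatrix (tensorPow μ n) hi σ =
      piKronecker fun j => linkMatrix μ hi (Function.eval j ∘ σ) := by
  ext x y
  simp only [linkMatrix, piKronecker, of_apply, marg_tensorPow, Fin.comp_snoc, Function.eval]

variable [DecidableEq V]

theorem hasLinkSpectralBounds_of_forall_face (hμ : ∀ τ, 0 ≤ μ τ)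
    (hsymm : ∀ (π : Equiv.Perm (Fin k)) (τ : Fin k → V), μ (τ ∘ π) = μ τ)
    (hface : ∀ (i : ℕ) (hi : i + 2 ≤ k) (σ : Fin i → V), 0 < marg μ i (by omega) σ →
      ∀ f : V → ℝ, lam i * ∑ u, (∑ v, linkMatrix μ hi σ u v) * f u ^ 2 ≤
        ∑ u, ∑ v, linkMatrix μ hi σ u v * f u * f v) :
    HasLinkSpectralBounds μ lam := by
  intro i hi σ
  obtain hσ | hσ := (marg_nonneg hμ (by omega : i ≤ k) σ).eq_or_lt
  · simpa [IsSpectralLowerBound, degreeMatrix, linkMatrix_eq_zero hμ hi hσ.symm] using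
      PosSemidef.zero
  · exact .of_forall_le (isSymm_linkMatrix hsymm hi σ) (hface i hi σ hσ)

theorem HasLinkSpectralBounds.tensorPow (hbound : HasLinkSpectralBounds μ lam)
    (hμ : ∀ τ, 0 ≤ μ τ) (hlam : ∀ i, i + 2 ≤ k → lam i ≤ 0) (n : ℕ) :
    HasLinkSpectralBounds (tensorPow μ n) lam := by
  intro i hi σ
  rw [linkMatrix_tensorPow]
  exact isSpectralLowerBound_piKronecker (fun j => hbound i hi _) (hlam i hi)
    fun j => linkMatrix_nonneg hμ hi _

end Links

section HoffmanBound

variable {V : Type*} [Fintype V] [DecidableEq V] {k : ℕ} {μ : (Fin (k + 1) → V) → ℝ}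
  {lam : ℕ → ℝ} {I : Finset V}

theorem IsIndependent.sum_marg_snoc_le (hI : IsIndependent μ I) (hμ : ∀ τ, 0 ≤ μ τ)
    (hbound : HasLinkSpectralBounds μ lam) (hlam : ∀ i < k, lam i ≤ 0) {i : ℕ} (hi : i ≤ k)
    (σ : Fin i → V) (hσ : ∀ j, σ j ∈ I) :
    ∑ x ∈ I, marg μ (i + 1) (by omega) (Fin.snoc σ x) ≤
      (1 - 1 / ∏ l ∈ Finset.Ico i k, (1 - lam l)) * marg μ i (by omega) σ := by
  have hsnoc {m : ℕ} {ρ : Fin m → V} (hρ : ∀ j, ρ j ∈ I) {x : V} (hx : x ∈ I) :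
      ∀ j, (Fin.snoc ρ x : Fin (m + 1) → V) j ∈ I :=
    Fin.lastCases (by simpa using hx) (by simpa using hρ)
  induction hi using Nat.decreasingInduction with
  | self =>
    have hzero : ∀ x ∈ I, marg μ (k + 1) le_rfl (Fin.snoc σ x) = 0 := fun x hx =>
      (marg_self μ _).trans (hI _ (hsnoc hσ hx))
    simp [Finset.sum_eq_zero hzero]
  | of_succ i hik ih =>
    set P := ∏ l ∈ Finset.Ico (i + 1) k, (1 - lam l)
    have hP : 1 ≤ P := Finset.one_le_prod fun l hl => by
      linarith [hlam l (Finset.mem_Ico.1 hl).2]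
    have hl : lam i ≤ 0 := hlam i hik
    have hε : 0 ≤ 1 - 1 / P := sub_nonneg.2 (div_le_one_of_le₀ hP (by linarith))
    have hi : i + 2 ≤ k + 1 := by omega
    have hprod : ∏ l ∈ Finset.Ico i k, (1 - lam l) = (1 - lam i) * P :=
      Finset.prod_eq_prod_Ico_succ_bot hik _
    have hconst : (1 - 1 / P - lam i) / (1 - lam i) = 1 - 1 / ((1 - lam i) * P) := by
      have : 1 - lam i ≠ 0 := by linarith
      field_simp
      ring
    have hstep := (hbound i hi σ).sum_degree_le (ε := 1 - 1 / P) (I := I)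
      (fun x => Finset.sum_nonneg fun y _ => linkMatrix_nonneg hμ hi σ x y)
      (by linarith) (by linarith) fun x hx => by
        rw [sum_linkMatrix]
        exact ih (Fin.snoc σ x) (hsnoc hσ hx)
    simpa only [sum_linkMatrix, sum_marg_snoc, hconst, ← hprod] using hstep

theorem IsIndependent.sum_marg_one_le (hI : IsIndependent μ I) (hμ : ∀ τ, 0 ≤ μ τ)
    (hbound : HasLinkSpectralBounds μ lam) (hlam : ∀ i < k, lam i ≤ 0) :
    ∑ x ∈ I, marg μ 1 (by omega) (fun _ => x) ≤
      (1 - 1 / ∏ i ∈ Finset.range k, (1 - lam i)) * ∑ τ, μ τ := by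
  have h := hI.sum_marg_snoc_le hμ hbound hlam (Nat.zero_le k) Fin.elim0 (fun j => j.elim0)
  rw [marg_zero, ← Finset.range_eq_Ico] at h
  convert h using 4 with x _ j
  simp [Fin.snoc]

end HoffmanBound

/-- **High dimensional Hoffman bound for tensor powers.** Let `μ` be a weighted `k`-uniform
hypergraph on a finite vertex set `V` (nonnegative, total sum 1, symmetric under permutations
of the `k` coordinates), whose link quadratic forms are bounded below by `λ_i ≤ 0`
(`0 ≤ i ≤ k-2`). Then for every `n ≥ 1`, every independent set `I` in the `n`-th tensor power
`μ_n` satisfies `∑_{x ∈ I} ∏_j m₁(x j) ≤ 1 - 1/((1-λ_0)⋯(1-λ_{k-2}))`. -/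
theorem high_dimensional_hoffman_bound_tensor_power
    {V : Type*} [Fintype V] [Nonempty V] (k : ℕ) (hk : 2 ≤ k)
    (μ : (Fin k → V) → ℝ)
    (hnonneg : ∀ τ : Fin k → V, 0 ≤ μ τ)
    (hsum : ∑ τ : Fin k → V, μ τ = 1)
    (hsymm : ∀ (π : Equiv.Perm (Fin k)) (τ : Fin k → V), μ (τ ∘ π) = μ τ)
    (lam : ℕ → ℝ)
    (hlam : ∀ i : ℕ, i ≤ k - 2 → lam i ≤ 0)
    (hspec : ∀ (i : ℕ) (hi : i ≤ k - 2) (σ : Fin i → V),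
      0 < marg μ i (by omega) σ →
      ∀ f : V → ℝ,
        ∑ u : V, ∑ v : V,
            marg μ (i + 2) (by omega) (Fin.snoc (Fin.snoc σ u) v) * f u * f v ≥
          lam i * ∑ v : V,
            (∑ u : V, marg μ (i + 2) (by omega) (Fin.snoc (Fin.snoc σ v) u)) * f v ^ 2)
    (n : ℕ) (hn : 1 ≤ n)
    (I : Finset (Fin n → V))
    (hind : ∀ τ : Fin k → (Fin n → V), (∀ i : Fin k, τ i ∈ I) → tensorPow μ n τ = 0) :
    ∑ x ∈ I, ∏ j : Fin n, marg μ 1 (by omega) (fun _ => x j) ≤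
      1 - 1 / ∏ i ∈ Finset.range (k - 1), (1 - lam i) := by
  classical
  obtain ⟨k, rfl⟩ := Nat.exists_eq_add_of_le' (one_le_two.trans hk)
  have hlam' : ∀ i < k, lam i ≤ 0 := fun i hi => hlam i (by omega)
  have hbound : HasLinkSpectralBounds μ lam :=
    hasLinkSpectralBounds_of_forall_face hnonneg hsymm fun i hi => hspec i (by omega)
  have hbound_pow : HasLinkSpectralBounds (tensorPow μ n) lam :=
    hbound.tensorPow hnonneg (fun i hi => hlam' i (by omega)) n
  have hoffman :=
    IsIndependent.sum_marg_one_le (I := I) hind (tensorPow_nonneg hnonneg n) hbound_pow hlam'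
  rw [sum_tensorPow, hsum, one_pow, mul_one] at hoffman
  simpa only [marg_tensorPow, Function.comp_def, Function.eval, Nat.add_sub_cancel] using hoffman
end

section
/- Let k ≥ 1 and let n be an integer with 3k ≤ n ≤ 4k - 1. If F is a family of 2k-element subsets of {1,…,n} that contains no three pairwise distinct members A, B, C with empty triple symmetric difference A Δ B Δ C = ∅, then |F| ≤ C(n-1, 2k-1), the binomial coefficient (n-1 choose 2k-1). -/
/-!
Join two `2k`-subsets of an `n`-set when they share exactly `k` points, and put `r = n - 2k`. If `A`
and `B` are adjacent then so are `A` and `A ∆ B`, so in a triangle-free family `F` the injection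
`B ↦ A ∆ B` sends the neighbours of `A` inside `F` to neighbours outside `F`: at most half of the
`d = C(2k, k) C(r, k)` neighbours of `A` lie in `F`. Hoffman's ratio bound, for a graph whose
eigenvalues are all at least `-d (2k - r) / (2r)`, turns this into `n |F| ≤ 2k C(n, 2k)`.

For the eigenvalue bound, every nonzero `S_n`-invariant space of functions on the `2k`-sets contains
the polytabloid of a two-row tableau. Each eigenvalue is therefore the sum of a polytabloid over a
neighbourhood, and expanding the polytabloid into characters of the cube writes this sum as a signed
average of products of two Krawtchouk numbers. One of the factors is a central Krawtchouk number,
which vanishes at odd arguments, so only half of the terms survive.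
-/

open Finset Equiv
open scoped Pointwise symmDiff

section Krawtchouk

open Polynomial

/-- The value `K_k(a)` of the Krawtchouk polynomial of degree `k` for the cube of dimension
`a + b`, given by its generating function. -/
noncomputable def krawtchouk (a b k : ℕ) : ℤ :=
  ((1 - X) ^ a * (1 + X) ^ b : ℤ[X]).coeff k

theorem krawtchouk_zero_left (b k : ℕ) : krawtchouk 0 b k = b.choose k := by
  simp [krawtchouk, coeff_one_add_X_pow]

theorem krawtchouk_zero_right (a b : ℕ) : krawtchouk a b 0 = 1 := by
  simp [krawtchouk, coeff_zero_eq_eval_zero]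

theorem krawtchouk_succ_left_succ (a b k : ℕ) :
    krawtchouk (a + 1) b (k + 1) = krawtchouk a b (k + 1) - krawtchouk a b k := by
  have hpoly : ((1 - X) ^ (a + 1) * (1 + X) ^ b : ℤ[X]) =
      (1 - X) ^ a * (1 + X) ^ b - (1 - X) ^ a * (1 + X) ^ b * X := by ring
  rw [krawtchouk, hpoly, coeff_sub, coeff_mul_X, krawtchouk, krawtchouk]

theorem krawtchouk_succ_right_succ (a b k : ℕ) :
    krawtchouk a (b + 1) (k + 1) = krawtchouk a b (k + 1) + krawtchouk a b k := by
  have hpoly : ((1 - X) ^ a * (1 + X) ^ (b + 1) : ℤ[X]) =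
      (1 - X) ^ a * (1 + X) ^ b + (1 - X) ^ a * (1 + X) ^ b * X := by ring
  rw [krawtchouk, hpoly, coeff_add, coeff_mul_X, krawtchouk, krawtchouk]

theorem krawtchouk_succ_left_add_succ_right (a b k : ℕ) :
    krawtchouk (a + 1) b k + krawtchouk a (b + 1) k = 2 * krawtchouk a b k := by
  have hpoly : ((1 - X) ^ (a + 1) * (1 + X) ^ b + (1 - X) ^ a * (1 + X) ^ (b + 1) : ℤ[X]) =
      2 * ((1 - X) ^ a * (1 + X) ^ b) := by ring
  rw [krawtchouk, krawtchouk, krawtchouk, ← coeff_add, hpoly, coeff_ofNat_mul]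

theorem krawtchouk_comm (a b k : ℕ) : krawtchouk b a k = (-1) ^ k * krawtchouk a b k := by
  have hpoly : ((1 - X) ^ b * (1 + X) ^ a : ℤ[X]) =
      ((1 - X) ^ a * (1 + X) ^ b : ℤ[X]).comp (C (-1) * X) := by
    simp [mul_comm, sub_eq_add_neg]
  rw [krawtchouk, hpoly, comp_C_mul_X_coeff, mul_comm, krawtchouk]

theorem abs_krawtchouk_comm (a b k : ℕ) : |krawtchouk b a k| = |krawtchouk a b k| := by
  rw [krawtchouk_comm a b, abs_mul, abs_neg_one_pow, one_mul]

-- The truncated `a - 1` and `b - 1` are harmless: their coefficients vanish at `0`.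
theorem krawtchouk_three_term (a b k : ℕ) :
    b * krawtchouk (a + 1) (b - 1) k + a * krawtchouk (a - 1) (b + 1) k =
      (a + b - 2 * k) * krawtchouk a b k := by
  have hpoly : (C (b : ℤ) * ((1 - X) ^ (a + 1) * (1 + X) ^ (b - 1)) +
        C (a : ℤ) * ((1 - X) ^ (a - 1) * (1 + X) ^ (b + 1)) : ℤ[X]) =
      C (a + b : ℤ) * ((1 - X) ^ a * (1 + X) ^ b) -
        2 * (X * derivative ((1 - X) ^ a * (1 + X) ^ b)) := by
    cases a <;> cases b <;> simp [derivative_mul, derivative_pow] <;> ring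
  have hderiv (p : ℤ[X]) : (X * derivative p).coeff k = k * p.coeff k := by
    cases k <;> simp [coeff_X_mul, coeff_derivative, mul_comm]
  have hcoeff := congrArg (coeff · k) hpoly
  simp only [coeff_add, coeff_sub, coeff_C_mul, coeff_ofNat_mul, hderiv] at hcoeff
  simp only [krawtchouk]
  linear_combination hcoeff

theorem add_one_mul_krawtchouk_one (b k : ℕ) :
    (b + 1) * krawtchouk 1 b k = (b + 1 - 2 * k) * (b + 1).choose k := by
  simpa [krawtchouk_zero_left] using krawtchouk_three_term 0 (b + 1) k

theorem krawtchouk_one_nonpos {b k : ℕ} (h : b < 2 * k) : krawtchouk 1 b k ≤ 0 := by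
  refine nonpos_of_mul_nonpos_right (a := (b + 1 : ℤ)) ?_ (by positivity)
  rw [add_one_mul_krawtchouk_one]
  exact mul_nonpos_of_nonpos_of_nonneg (by lia) (by positivity)

theorem krawtchouk_central_add_two {a b k : ℕ} (h : a + b + 2 = 2 * k) :
    (b + 1) * krawtchouk (a + 2) b k = -((a + 1) * krawtchouk a (b + 2) k) := by
  have hrec := krawtchouk_three_term (a + 1) (b + 1) k
  have hzero : ((a + 1 : ℕ) + (b + 1 : ℕ) - 2 * k : ℤ) = 0 := by lia
  rw [hzero, zero_mul] at hrec
  simp only [add_tsub_cancel_right, Nat.cast_add, Nat.cast_one] at hrec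
  linear_combination hrec

theorem krawtchouk_central_eq_zero_of_odd {a b k : ℕ} (h : a + b = 2 * k) (ha : Odd a) :
    krawtchouk a b k = 0 := by
  obtain ⟨m, rfl⟩ := ha
  induction m generalizing b with
  | zero =>
    have hone := add_one_mul_krawtchouk_one b k
    rw [show (b + 1 - 2 * k : ℤ) = 0 by lia, zero_mul] at hone
    exact (mul_eq_zero.mp hone).resolve_left (by positivity)
  | succ m ih =>
    have hstep := krawtchouk_central_add_two (a := 2 * m + 1) (b := b) (k := k) (by lia)
    rw [ih (by lia), mul_zero, neg_zero] at hstep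
    exact (mul_eq_zero.mp hstep).resolve_left (by positivity)

theorem krawtchouk_two_central {b k : ℕ} (h : b + 2 = 2 * k) :
    (b + 1) * krawtchouk 2 b k = -(2 * k).choose k := by
  simpa [krawtchouk_zero_left, h] using
    krawtchouk_central_add_two (a := 0) (b := b) (k := k) (by lia)

theorem abs_krawtchouk_central_le_of_le {a b k : ℕ} (h : a + b = 2 * k) (ha : 1 ≤ a)
    (hab : a ≤ b) : (2 * k - 1) * |krawtchouk a b k| ≤ (2 * k).choose k := by
  induction a using Nat.strong_induction_on generalizing b with
  | _ a ih =>
    match a with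
    | 1 => simp [krawtchouk_central_eq_zero_of_odd h odd_one]
    | 2 =>
      have htwo := congrArg abs (krawtchouk_two_central (b := b) (k := k) (by lia))
      rw [abs_mul, abs_neg, Nat.abs_cast,
        abs_of_nonneg (show (0 : ℤ) ≤ b + 1 by positivity)] at htwo
      rw [← htwo, show (2 * k - 1 : ℤ) = b + 1 by lia]
    | a + 3 =>
      have ih' := ih (a + 1) (by lia) (b := b + 2) (by lia) (by lia) (by lia)
      have hstep : (b + 1) * |krawtchouk (a + 3) b k| =
          ((a + 1 : ℕ) + 1) * |krawtchouk (a + 1) (b + 2) k| := by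
        have habs := congrArg abs
          (krawtchouk_central_add_two (a := a + 1) (b := b) (k := k) (by lia))
        rwa [abs_neg, abs_mul, abs_mul, abs_of_nonneg (show (0 : ℤ) ≤ b + 1 by positivity),
          abs_of_nonneg (show (0 : ℤ) ≤ (a + 1 : ℕ) + 1 by positivity)] at habs
      have habs : |krawtchouk (a + 3) b k| ≤ |krawtchouk (a + 1) (b + 2) k| := by
        refine le_of_mul_le_mul_left (a := (b + 1 : ℤ)) ?_ (by positivity)
        rw [hstep]
        gcongr
        lia
      exact (mul_le_mul_of_nonneg_left habs (by lia)).trans ih'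

theorem abs_krawtchouk_central_le {a b k : ℕ} (h : a + b = 2 * k) (ha : 1 ≤ a) (hb : 1 ≤ b) :
    (2 * k - 1) * |krawtchouk a b k| ≤ (2 * k).choose k := by
  rcases le_total a b with hab | hba
  · exact abs_krawtchouk_central_le_of_le h ha hab
  · rw [abs_krawtchouk_comm b a]
    exact abs_krawtchouk_central_le_of_le (by lia) hb hba

-- By parity, only one of the two central values adjacent to `(a, b)` is nonzero.
theorem abs_krawtchouk_le_of_add_add_one_eq {a b k : ℕ} (h : a + b + 3 = 2 * k) :
    |krawtchouk (a + 1) (b + 1) k| ≤ -krawtchouk 1 (a + b + 1) k := by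
  have hpos : (0 : ℤ) < 2 * (2 * k - 1) := by lia
  have habs : (2 * k - 1) * |2 * krawtchouk (a + 1) (b + 1) k| ≤ (2 * k).choose k := by
    rw [← krawtchouk_succ_left_add_succ_right]
    rcases Nat.even_or_odd (a + 1) with ha | ha
    · rw [krawtchouk_central_eq_zero_of_odd (by lia) ha.add_one, zero_add]
      exact abs_krawtchouk_central_le (by lia) (by lia) (by lia)
    · rw [krawtchouk_central_eq_zero_of_odd (a := a + 1) (by lia) ha, add_zero]
      exact abs_krawtchouk_central_le (by lia) (by lia) (by lia)
  have hone : (2 * k - 1) * (2 * krawtchouk 1 (a + b + 1) k) = -(2 * k).choose k := by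
    rw [← krawtchouk_succ_left_add_succ_right,
      krawtchouk_central_eq_zero_of_odd (a := 1) (by lia) odd_one, add_zero,
      ← krawtchouk_two_central (b := a + b + 1) (by lia)]
    congr 1
    lia
  rw [abs_mul, abs_two] at habs
  refine le_of_mul_le_mul_left ?_ hpos
  linarith

theorem abs_krawtchouk_le_neg_krawtchouk_one {a b k : ℕ} (h : a + b + 2 < 2 * k) :
    |krawtchouk (a + 1) (b + 1) k| ≤ -krawtchouk 1 (a + b + 1) k := by
  induction b generalizing k with
  | zero =>
    rw [abs_krawtchouk_comm 1 (a + 1), abs_of_nonpos (krawtchouk_one_nonpos (by lia))]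
  | succ b ih =>
    rcases eq_or_ne (a + (b + 1) + 3) (2 * k) with hk | hk
    · exact abs_krawtchouk_le_of_add_add_one_eq hk
    obtain ⟨k, rfl⟩ : ∃ l, k = l + 1 := ⟨k - 1, by lia⟩
    calc |krawtchouk (a + 1) (b + 1 + 1) (k + 1)|
        ≤ |krawtchouk (a + 1) (b + 1) (k + 1)| + |krawtchouk (a + 1) (b + 1) k| := by
          rw [krawtchouk_succ_right_succ]
          exact abs_add_le _ _
      _ ≤ -krawtchouk 1 (a + b + 1) (k + 1) + -krawtchouk 1 (a + b + 1) k :=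
          add_le_add (ih (by lia)) (ih (by lia))
      _ = -krawtchouk 1 (a + b + 1 + 1) (k + 1) := by
          rw [krawtchouk_succ_right_succ 1 (a + b + 1)]
          ring

theorem add_mul_abs_krawtchouk_le {a b k : ℕ} (ha : 1 ≤ a) (hb : 1 ≤ b) (h : a + b < 2 * k) :
    (a + b) * |krawtchouk a b k| ≤ (2 * k - (a + b)) * (a + b).choose k := by
  obtain ⟨a, rfl⟩ := Nat.exists_eq_add_of_le' ha
  obtain ⟨b, rfl⟩ := Nat.exists_eq_add_of_le' hb
  have hone := add_one_mul_krawtchouk_one (a + b + 1) k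
  have hle := mul_le_mul_of_nonneg_left
    (abs_krawtchouk_le_neg_krawtchouk_one (a := a) (b := b) (k := k) (by lia))
    (show (0 : ℤ) ≤ a + b + 2 by positivity)
  rw [show a + b + 1 + 1 = a + 1 + (b + 1) by ring] at hone
  push_cast at hone ⊢
  linarith

theorem abs_krawtchouk_le_choose (a b k : ℕ) : |krawtchouk a b k| ≤ (a + b).choose k := by
  induction a generalizing k with
  | zero => simp [krawtchouk_zero_left]
  | succ a ih =>
    cases k with
    | zero => simp [krawtchouk_zero_right]
    | succ k =>
      rw [krawtchouk_succ_left_succ, Nat.succ_add, Nat.choose_succ_succ', Nat.cast_add]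
      exact (abs_sub _ _).trans (by linarith [ih k, ih (k + 1)])

theorem mul_abs_krawtchouk_mul_abs_krawtchouk_le {k r s t : ℕ} (hr : r < 2 * k)
    (hst : 1 ≤ s + t) (hstr : s + t < r) :
    r * (|krawtchouk t (2 * k - t) k| * |krawtchouk s (r - s) k|) ≤
      if Even t then (2 * k - r) * ((2 * k).choose k * r.choose k : ℤ) else 0 := by
  split_ifs with ht
  · rcases Nat.eq_zero_or_pos s with rfl | hs
    · have hcentral := abs_krawtchouk_central_le (a := t) (b := 2 * k - t) (k := k)
        (by lia) (by lia) (by lia)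
      rw [krawtchouk_zero_left, Nat.abs_cast, ← mul_assoc, ← mul_assoc]
      refine mul_le_mul_of_nonneg_right ?_ (by positivity)
      calc r * |krawtchouk t (2 * k - t) k|
          ≤ (2 * k - 1) * |krawtchouk t (2 * k - t) k| := by gcongr; lia
        _ ≤ 1 * (2 * k).choose k := by rwa [one_mul]
        _ ≤ (2 * k - r) * (2 * k).choose k := by gcongr; lia
    · have hleft := abs_krawtchouk_le_choose t (2 * k - t) k
      have hright := add_mul_abs_krawtchouk_le (a := s) (b := r - s) (k := k) hs
        (by lia) (by lia)
      rw [Nat.add_sub_cancel' (by lia)] at hleft hright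
      rw [show (s + (r - s : ℕ) : ℤ) = r by lia] at hright
      calc r * (|krawtchouk t (2 * k - t) k| * |krawtchouk s (r - s) k|)
          = |krawtchouk t (2 * k - t) k| * (r * |krawtchouk s (r - s) k|) := by ring
        _ ≤ (2 * k).choose k * ((2 * k - r) * r.choose k) := by gcongr
        _ = (2 * k - r) * ((2 * k).choose k * r.choose k : ℤ) := by ring
  · simp [krawtchouk_central_eq_zero_of_odd (show t + (2 * k - t) = 2 * k by lia)
      (Nat.not_even_iff_odd.mp ht)]

theorem prod_ite_mem_neg_one {α : Type*} [DecidableEq α] (S P : Finset α) :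
    ∏ x ∈ S, (if x ∈ P then (-1 : ℤ) else 1) = (-1) ^ #(S ∩ P) := by
  rw [prod_ite, prod_const, prod_const_one, mul_one, filter_mem_eq_inter]

theorem sum_powersetCard_neg_one_pow_card_inter {α : Type*} [DecidableEq α] {T U : Finset α}
    (hT : T ⊆ U) (k : ℕ) :
    ∑ P ∈ powersetCard k U, (-1 : ℤ) ^ #(T ∩ P) = krawtchouk #T #(U \ T) k := by
  have hprod : ((1 - X) ^ #T * (1 + X) ^ #(U \ T) : ℤ[X]) =
      ∏ u ∈ U, (1 + C (if u ∈ T then (-1) else 1) * X) := by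
    rw [← prod_sdiff hT, mul_comm, ← prod_const, ← prod_const]
    congr 1 <;> refine prod_congr rfl fun u hu ↦ ?_
    · simp [(mem_sdiff.mp hu).2]
    · simp [hu, sub_eq_add_neg]
  have hcoeff (P : Finset α) : (∏ u ∈ P, C (if u ∈ T then (-1 : ℤ) else 1) * X).coeff k =
      if #P = k then (-1) ^ #(T ∩ P) else 0 := by
    rw [prod_mul_distrib, prod_const, ← map_prod, coeff_C_mul, coeff_X_pow,
      prod_ite_mem_neg_one, inter_comm]
    simp [eq_comm]
  rw [krawtchouk, hprod, prod_one_add, finsetSum_coeff, powersetCard_eq_filter, sum_filter]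
  exact sum_congr rfl fun P _ ↦ (hcoeff P).symm

end Krawtchouk

theorem two_mul_two_mul_sub_one_le_choose {k : ℕ} (hk : 0 < k) :
    2 * (2 * k - 1) ≤ (2 * k).choose k := by
  obtain ⟨j, rfl⟩ : ∃ j, k = j + 1 := ⟨k - 1, by lia⟩
  have hcatalan : j + 1 ≤ j.centralBinom :=
    Nat.le_of_dvd j.centralBinom_pos j.succ_dvd_centralBinom
  refine Nat.le_of_mul_le_mul_left ?_ j.succ_pos
  calc (j + 1) * (2 * (2 * (j + 1) - 1)) = 2 * (2 * j + 1) * (j + 1) := by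
        rw [show 2 * (j + 1) - 1 = 2 * j + 1 by lia]; ring
    _ ≤ 2 * (2 * j + 1) * j.centralBinom := by gcongr
    _ = (j + 1) * (2 * (j + 1)).choose (j + 1) := by
        rw [← Nat.succ_mul_centralBinom_succ, Nat.centralBinom_eq_two_mul_choose]

theorem two_mul_sum_powerset_ite_even {α : Type*} {X : Finset α} (hX : X.Nonempty) :
    2 * ∑ T ∈ X.powerset, (if Even #T then (1 : ℤ) else 0) = 2 ^ #X := by
  have hsign (j : ℕ) : 2 * (if Even j then (1 : ℤ) else 0) = 1 + (-1) ^ j := by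
    split_ifs with hj
    · rw [hj.neg_one_pow]; rfl
    · rw [(Nat.not_even_iff_odd.mp hj).neg_one_pow]; rfl
  simp only [mul_sum, hsign, sum_add_distrib, sum_powerset_neg_one_pow_card_of_nonempty hX]
  simp

section Polytabloid

variable {α : Type*} [DecidableEq α] {A B R X : Finset α} {σ : α → α}

/-- The polytabloid of the two-row tableau whose columns are the pairs `(x, σ x)` with `x ∈ X`,
as a function on finite sets `B`: tabloids are identified with their first row `B`, so that each
column contributes `1` if only `x` lies in `B` and `-1` if only `σ x` does. -/
def polytabloid (X : Finset α) (σ : α → α) (B : Finset α) : ℤ :=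
  ∏ x ∈ X, ((if x ∈ B then 1 else 0) - (if σ x ∈ B then 1 else 0))

theorem polytabloid_eq_one (hX : X ⊆ A) (hσ : ∀ x ∈ X, σ x ∉ A) : polytabloid X σ A = 1 :=
  prod_eq_one fun x hx ↦ by simp [hX hx, hσ x hx]

theorem polytabloid_eq_zero {x : α} (hx : x ∈ X) (h : x ∈ B ↔ σ x ∈ B) :
    polytabloid X σ B = 0 :=
  prod_eq_zero hx (by simp [h])

theorem abs_polytabloid_le_one (X : Finset α) (σ : α → α) (B : Finset α) :
    |polytabloid X σ B| ≤ 1 := by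
  rw [polytabloid, abs_prod]
  refine prod_le_one (fun _ _ ↦ abs_nonneg _) fun x _ ↦ ?_
  split_ifs <;> simp

theorem two_pow_card_mul_polytabloid_union {P Q : Finset α} (hAR : Disjoint A R) (hXA : X ⊆ A)
    (hσ : Set.MapsTo σ X R) (hinj : Set.InjOn σ X) (hP : P ⊆ A) (hQ : Q ⊆ R) :
    2 ^ #X * polytabloid X σ (P ∪ Q) =
      ∑ T ∈ X.powerset, (-1) ^ #T * ((-1) ^ #(T ∩ P) * (-1) ^ #((X \ T).image σ ∩ Q)) := by
  have hfactor : ∀ x ∈ X,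
      (2 : ℤ) * ((if x ∈ P ∪ Q then 1 else 0) - (if σ x ∈ P ∪ Q then 1 else 0)) =
        -1 * (if x ∈ P then -1 else 1) + (if σ x ∈ Q then -1 else 1) := fun x hx ↦ by
    have hxQ : x ∉ Q := fun h ↦ disjoint_left.mp hAR (hXA hx) (hQ h)
    have hσxP : σ x ∉ P := fun h ↦ disjoint_left.mp hAR (hP h) (hσ hx)
    simp only [mem_union, hxQ, hσxP, or_false, false_or]
    split_ifs <;> rfl
  rw [polytabloid, ← prod_const, ← prod_mul_distrib, prod_congr rfl hfactor, prod_add]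
  refine sum_congr rfl fun T _ ↦ ?_
  rw [prod_mul_distrib, prod_const, prod_ite_mem_neg_one,
    ← prod_ite_mem_neg_one (image _ _), prod_image (hinj.mono (coe_subset.mpr sdiff_subset)),
    mul_assoc]

theorem two_pow_card_mul_sum_polytabloid (k : ℕ) (hAR : Disjoint A R) (hXA : X ⊆ A)
    (hσ : Set.MapsTo σ X R) (hinj : Set.InjOn σ X) :
    2 ^ #X * ∑ P ∈ powersetCard k A, ∑ Q ∈ powersetCard k R, polytabloid X σ (P ∪ Q) =
      ∑ T ∈ X.powerset, (-1) ^ #T *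
        (krawtchouk #T (#A - #T) k * krawtchouk #(X \ T) (#R - #(X \ T)) k) := by
  have hterm : ∀ T ∈ X.powerset,
      krawtchouk #T (#A - #T) k * krawtchouk #(X \ T) (#R - #(X \ T)) k =
        ∑ P ∈ powersetCard k A, ∑ Q ∈ powersetCard k R,
          (-1) ^ #(T ∩ P) * (-1) ^ #((X \ T).image σ ∩ Q) := fun T hT ↦ by
    have hTA : T ⊆ A := (mem_powerset.mp hT).trans hXA
    have hsub : (X \ T : Finset α) ⊆ X := sdiff_subset
    have himage : (X \ T).image σ ⊆ R := image_subset_iff.mpr fun x hx ↦ hσ (hsub hx)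
    rw [← sum_mul_sum, sum_powersetCard_neg_one_pow_card_inter hTA,
      sum_powersetCard_neg_one_pow_card_inter himage, card_sdiff_of_subset hTA,
      card_sdiff_of_subset himage, card_image_of_injOn (hinj.mono (coe_subset.mpr hsub))]
  calc 2 ^ #X * ∑ P ∈ powersetCard k A, ∑ Q ∈ powersetCard k R, polytabloid X σ (P ∪ Q)
      = ∑ P ∈ powersetCard k A, ∑ Q ∈ powersetCard k R, ∑ T ∈ X.powerset,
          (-1) ^ #T * ((-1) ^ #(T ∩ P) * (-1) ^ #((X \ T).image σ ∩ Q)) := by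
        simp_rw [mul_sum]
        exact sum_congr rfl fun P hP ↦ sum_congr rfl fun Q hQ ↦
          two_pow_card_mul_polytabloid_union hAR hXA hσ hinj (mem_powersetCard.mp hP).1
            (mem_powersetCard.mp hQ).1
    _ = ∑ T ∈ X.powerset, ∑ P ∈ powersetCard k A, ∑ Q ∈ powersetCard k R,
          (-1) ^ #T * ((-1) ^ #(T ∩ P) * (-1) ^ #((X \ T).image σ ∩ Q)) :=
        (sum_congr rfl fun _ _ ↦ sum_comm).trans sum_comm
    _ = _ := sum_congr rfl fun T hT ↦ by
        rw [hterm T hT]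
        simp_rw [mul_sum]

theorem two_mul_abs_sum_polytabloid_le_of_card_lt {k : ℕ} (hA : #A = 2 * k) (hAR : Disjoint A R)
    (hR : #R < 2 * k) (hXA : X ⊆ A) (hX : X.Nonempty) (hXR : #X < #R)
    (hσ : Set.MapsTo σ X R) (hinj : Set.InjOn σ X) :
    2 * #R * |∑ P ∈ powersetCard k A, ∑ Q ∈ powersetCard k R, polytabloid X σ (P ∪ Q)| ≤
      (2 * k - #R) * ((2 * k).choose k * (#R).choose k) := by
  have hsum := congrArg abs (two_pow_card_mul_sum_polytabloid k hAR hXA hσ hinj)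
  rw [abs_mul, abs_pow, abs_two, hA] at hsum
  set S := |∑ P ∈ powersetCard k A, ∑ Q ∈ powersetCard k R, polytabloid X σ (P ∪ Q)|
  set D : ℤ := (2 * k - #R) * ((2 * k).choose k * (#R).choose k)
  have hterm : ∀ T ∈ X.powerset, #R * |(-1) ^ #T *
      (krawtchouk #T (2 * k - #T) k * krawtchouk #(X \ T) (#R - #(X \ T)) k)| ≤
        D * if Even #T then 1 else 0 := fun T hT ↦ by
    have hcard := card_sdiff_add_card_eq_card (mem_powerset.mp hT)
    rw [abs_mul, abs_neg_one_pow, one_mul, abs_mul, mul_ite, mul_one, mul_zero]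
    exact mul_abs_krawtchouk_mul_abs_krawtchouk_le hR (by rw [hcard]; exact hX.card_pos) (by lia)
  refine le_of_mul_le_mul_left ?_ (show (0 : ℤ) < 2 ^ #X by positivity)
  calc 2 ^ #X * (2 * #R * S) = 2 * (#R * (2 ^ #X * S)) := by ring
    _ ≤ 2 * (#R * ∑ T ∈ X.powerset, |(-1) ^ #T *
          (krawtchouk #T (2 * k - #T) k * krawtchouk #(X \ T) (#R - #(X \ T)) k)|) := by
        rw [hsum]
        gcongr
        exact abs_sum_le_sum_abs _ _
    _ ≤ 2 * (D * ∑ T ∈ X.powerset, if Even #T then 1 else 0) := by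
        refine mul_le_mul_of_nonneg_left ?_ zero_le_two
        rw [mul_sum, mul_sum]
        exact sum_le_sum hterm
    _ = 2 ^ #X * D := by rw [← two_mul_sum_powerset_ite_even hX]; ring

theorem eq_sdiff_filter_of_polytabloid_ne_zero {k : ℕ} {P Q : Finset α} (hA : #A = 2 * k)
    (hXA : X ⊆ A) (hinj : Set.InjOn σ X) (hXR : X.image σ = R) (hP : P ∈ powersetCard k A)
    (hQ : Q ∈ powersetCard k R) (hne : polytabloid X σ (P ∪ Q) ≠ 0) :
    P = A \ {x ∈ X | σ x ∈ Q} := by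
  rw [mem_powersetCard] at hP hQ
  have hsub : {x ∈ X | σ x ∈ Q} ⊆ A := (filter_subset _ _).trans hXA
  have himage : image σ {x ∈ X | σ x ∈ Q} = Q := by
    rw [← filter_image (p := (· ∈ Q)), hXR, filter_mem_eq_inter, inter_eq_right.mpr hQ.1]
  have hcard : #{x ∈ X | σ x ∈ Q} = k := by
    rw [← card_image_of_injOn (hinj.mono (coe_subset.mpr (filter_subset _ _))), himage, hQ.2]
  refine eq_of_subset_of_card_le (fun x hx ↦ mem_sdiff.mpr ⟨hP.1 hx, fun hxQ ↦ hne ?_⟩) ?_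
  · obtain ⟨hxX, hσx⟩ := mem_filter.mp hxQ
    exact polytabloid_eq_zero hxX (by simp [hx, hσx])
  · rw [card_sdiff_of_subset hsub, hA, hcard, hP.2]
    lia

theorem abs_sum_polytabloid_le_choose {k : ℕ} (hA : #A = 2 * k) (hXA : X ⊆ A)
    (hinj : Set.InjOn σ X) (hXR : X.image σ = R) :
    |∑ P ∈ powersetCard k A, ∑ Q ∈ powersetCard k R, polytabloid X σ (P ∪ Q)| ≤
      (#R).choose k := by
  have hinner : ∀ Q ∈ powersetCard k R,
      |∑ P ∈ powersetCard k A, polytabloid X σ (P ∪ Q)| ≤ 1 := fun Q hQ ↦ by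
    by_cases hmem : A \ {x ∈ X | σ x ∈ Q} ∈ powersetCard k A
    · rw [sum_eq_single_of_mem _ hmem fun P hP hne ↦ not_ne_iff.mp fun h ↦
        hne (eq_sdiff_filter_of_polytabloid_ne_zero hA hXA hinj hXR hP hQ h)]
      exact abs_polytabloid_le_one _ _ _
    · rw [sum_eq_zero fun P hP ↦ not_ne_iff.mp fun h ↦ hmem
        (eq_sdiff_filter_of_polytabloid_ne_zero hA hXA hinj hXR hP hQ h ▸ hP)]
      simp
  rw [sum_comm]
  refine (abs_sum_le_sum_abs _ _).trans ((sum_le_card_nsmul _ _ 1 hinner).trans ?_)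
  simp

theorem two_mul_abs_sum_polytabloid_le_of_card_eq {k : ℕ} (hA : #A = 2 * k) (hR : #R < 2 * k)
    (hXA : X ⊆ A) (hinj : Set.InjOn σ X) (hXR : X.image σ = R) :
    2 * #R * |∑ P ∈ powersetCard k A, ∑ Q ∈ powersetCard k R, polytabloid X σ (P ∪ Q)| ≤
      (2 * k - #R) * ((2 * k).choose k * (#R).choose k) := by
  have hcentral : (2 * #R : ℤ) ≤ (2 * k).choose k := by
    have := two_mul_two_mul_sub_one_le_choose (k := k) (by lia)
    lia
  calc 2 * #R * |∑ P ∈ powersetCard k A, ∑ Q ∈ powersetCard k R, polytabloid X σ (P ∪ Q)|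
      ≤ 1 * ((2 * k).choose k * (#R).choose k) := by
        rw [one_mul]
        gcongr
        exact abs_sum_polytabloid_le_choose hA hXA hinj hXR
    _ ≤ (2 * k - #R) * ((2 * k).choose k * (#R).choose k) := by gcongr; lia

theorem two_mul_abs_sum_polytabloid_le {k : ℕ} (hA : #A = 2 * k) (hAR : Disjoint A R)
    (hR : #R < 2 * k) (hXA : X ⊆ A) (hX : X.Nonempty) (hσ : Set.MapsTo σ X R)
    (hinj : Set.InjOn σ X) :
    2 * #R * |∑ P ∈ powersetCard k A, ∑ Q ∈ powersetCard k R, polytabloid X σ (P ∪ Q)| ≤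
      (2 * k - #R) * ((2 * k).choose k * (#R).choose k) := by
  rcases (card_le_card_of_injOn σ hσ hinj).lt_or_eq with hlt | heq
  · exact two_mul_abs_sum_polytabloid_le_of_card_lt hA hAR hR hXA hX hlt hσ hinj
  · refine two_mul_abs_sum_polytabloid_le_of_card_eq hA hR hXA hinj ?_
    exact eq_of_subset_of_card_le (image_subset_iff.mpr hσ) (by
      rw [card_image_of_injOn hinj, heq])

end Polytabloid

section SwapAction

variable {α : Type*} [DecidableEq α]

theorem mem_swap_smul {x y z : α} {B : Finset α} : z ∈ swap x y • B ↔ swap x y z ∈ B := by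
  rw [← Finset.inv_smul_mem_iff, swap_inv, Perm.smul_def]

theorem swap_smul_eq_self {x y : α} {B : Finset α} (h : x ∈ B ↔ y ∈ B) : swap x y • B = B := by
  ext z
  rw [mem_swap_smul, swap_apply_def]
  split_ifs with hx hy
  · rw [hx, h]
  · rw [hy, h]
  · rfl

theorem card_sdiff_swap_smul_lt {A B : Finset α} {u v : α} (hu : u ∈ A \ B) (hv : v ∈ B \ A) :
    #(A \ swap u v • B) < #(A \ B) := by
  have huB : u ∉ B := (mem_sdiff.mp hu).2
  obtain ⟨hvB, hvA⟩ := mem_sdiff.mp hv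
  refine card_lt_card (ssubset_iff_of_subset ?_ |>.mpr ⟨u, hu, by simp [mem_swap_smul, hvB]⟩)
  intro z hz
  rw [mem_sdiff, mem_swap_smul] at hz
  refine mem_sdiff.mpr ⟨hz.1, fun hzB ↦ hz.2 ?_⟩
  rwa [swap_apply_of_ne_of_ne (ne_of_mem_of_not_mem hzB huB) (ne_of_mem_of_not_mem hz.1 hvA)]

theorem polytabloid_swap_smul_of_mem {B X : Finset α} {σ : α → α} {x : α}
    (hinj : Set.InjOn σ X) (hσ : ∀ y ∈ X, σ y ∉ X) (hx : x ∈ X) :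
    polytabloid X σ (swap x (σ x) • B) = -polytabloid X σ B := by
  rw [polytabloid, polytabloid, ← mul_prod_erase _ _ hx, ← mul_prod_erase _ _ hx, ← neg_mul]
  refine congrArg₂ (· * ·) (by simp [mem_swap_smul]) (prod_congr rfl fun y hy ↦ ?_)
  obtain ⟨hyx, hyX⟩ := mem_erase.mp hy
  simp only [mem_swap_smul,
    swap_apply_of_ne_of_ne hyx (ne_of_mem_of_not_mem hyX (hσ x hx)),
    swap_apply_of_ne_of_ne (ne_of_mem_of_not_mem hx (hσ y hyX)).symm
      fun h ↦ hyx (hinj hyX hx h)]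

theorem polytabloid_swap_smul_of_notMem {B X : Finset α} {σ : α → α} {u v : α}
    (hu : u ∉ X) (hv : v ∉ X) (hσu : ∀ x ∈ X, σ x ≠ u) (hσv : ∀ x ∈ X, σ x ≠ v) :
    polytabloid X σ (swap u v • B) = polytabloid X σ B := by
  refine prod_congr rfl fun x hx ↦ ?_
  simp only [mem_swap_smul, swap_apply_of_ne_of_ne (hσu x hx) (hσv x hx),
    swap_apply_of_ne_of_ne (ne_of_mem_of_not_mem hx hu) (ne_of_mem_of_not_mem hx hv)]

end SwapAction

section AlternatesAlong

variable {α β R : Type*} [DecidableEq α] [MulAction (Perm α) β] [Ring R] {σ : Perm α}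

/-- The function `g` changes sign under the transposition of each pair `{x, σ x}` of points moved
by the involution `σ`, that is, under the columns of length two of a two-row tableau. -/
def AlternatesAlong (σ : Perm α) (g : β → R) : Prop :=
  ∀ x, σ x ≠ x → ∀ B, g (swap x (σ x) • B) = -g B

theorem AlternatesAlong.sub_swap_smul {g : β → R} (hg : AlternatesAlong σ g)
    {u v : α} (hu : σ u = u) (hv : σ v = v) :
    AlternatesAlong (σ * swap u v) fun B ↦ g B - g (swap u v • B) := by
  intro x hx B
  rcases eq_or_ne x u with rfl | hxu
  · simp [hv]
  rcases eq_or_ne x v with rfl | hxv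
  · simp [hu, swap_comm x u]
  have hσx : (σ * swap u v) x = σ x := by rw [Perm.mul_apply, swap_apply_of_ne_of_ne hxu hxv]
  rw [hσx] at hx ⊢
  have hdisj : Perm.Disjoint (swap u v) (swap x (σ x)) := by
    have hσu : u ≠ σ x := fun h ↦ hxu (σ.injective (h.symm.trans hu.symm))
    have hσv : v ≠ σ x := fun h ↦ hxv (σ.injective (h.symm.trans hv.symm))
    intro z
    simp only [swap_apply_def]
    grind
  simp only [hg x hx, smul_smul, hdisj.commute.eq]
  simp only [← smul_smul, hg x hx]
  abel

theorem exists_mem_alternatesAlong [Finite α] {V : Submodule R (β → R)} (hV : V ≠ ⊥)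
    (hinv : ∀ π : Perm α, ∀ g ∈ V, (fun B ↦ g (π • B)) ∈ V) :
    ∃ σ : Perm α, σ * σ = 1 ∧ ∃ g ∈ V, g ≠ 0 ∧ AlternatesAlong σ g ∧
      ∀ u v, σ u = u → σ v = v → ∀ B, g (swap u v • B) = g B := by
  cases nonempty_fintype α
  obtain ⟨g₀, hg₀V, hg₀⟩ := V.exists_mem_ne_zero_of_ne_bot hV
  let S : Set (Perm α) := {σ | σ * σ = 1 ∧ ∃ g ∈ V, g ≠ 0 ∧ AlternatesAlong σ g}
  have hone : 1 ∈ S := ⟨mul_one 1, g₀, hg₀V, hg₀, fun x hx ↦ absurd rfl hx⟩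
  obtain ⟨σ, ⟨hσ, g, hgV, hg, halt⟩, hmax⟩ :=
    S.toFinite.exists_maximalFor (fun σ ↦ #σ.support) S ⟨1, hone⟩
  refine ⟨σ, hσ, g, hgV, hg, halt, fun u v hu hv B ↦ ?_⟩
  by_contra hB
  have huv : u ≠ v := by rintro rfl; exact hB (by rw [swap_self, ← Perm.one_def, one_smul])
  have hdisj : Perm.Disjoint σ (swap u v) := fun z ↦ by
    simp only [swap_apply_def]
    grind
  have hmem : σ * swap u v ∈ S := by
    refine ⟨?_, _, V.sub_mem hgV (hinv (swap u v) g hgV), fun h ↦ hB ?_,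
      halt.sub_swap_smul hu hv⟩
    · rw [hdisj.commute.symm.mul_mul_mul_comm, hσ, swap_mul_self, one_mul]
    · exact (sub_eq_zero.mp (congrFun h B)).symm
  have hcard := hdisj.card_support_mul
  rw [Perm.card_support_swap huv] at hcard
  have := hmax hmem (by lia)
  lia

/-- The set `A` contains exactly one point of each pair `{x, σ x}` of points moved by the
involution `σ`. -/
def IsColumnTransversal (σ : Perm α) (A : Finset α) : Prop :=
  ∀ x, σ x ≠ x → (σ x ∈ A ↔ x ∉ A)

theorem IsColumnTransversal.apply_notMem {A : Finset α} (hA : IsColumnTransversal σ A) {x : α}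
    (hx : x ∈ A.filter fun y ↦ σ y ≠ y) : σ x ∉ A := by
  rw [mem_filter] at hx
  exact fun h ↦ (hA x hx.2).mp h hx.1

theorem IsColumnTransversal.alternatesAlong_polytabloid {m : ℕ} {A : Finset α} (hσ : σ * σ = 1)
    (hA : IsColumnTransversal σ A) :
    AlternatesAlong σ fun B : Set.powersetCard α m ↦
      (polytabloid (A.filter fun x ↦ σ x ≠ x) σ B : R) := by
  have hcolumn (x : α) (hx : x ∈ A.filter fun y ↦ σ y ≠ y) (B : Finset α) :=
    polytabloid_swap_smul_of_mem (B := B) σ.injective.injOn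
      (fun y hy h ↦ hA.apply_notMem hy (mem_filter.mp h).1) hx
  intro x hx B
  simp only [Set.powersetCard.coe_smul, ← Int.cast_neg]
  congr 1
  by_cases hxA : x ∈ A
  · exact hcolumn x (mem_filter.mpr ⟨hxA, hx⟩) B
  · have hσσ : σ (σ x) = x := DFunLike.congr_fun hσ x
    have hflip := hcolumn (σ x)
      (mem_filter.mpr ⟨(hA x hx).mpr hxA, by rw [hσσ]; exact hx.symm⟩) B
    rwa [hσσ, swap_comm] at hflip

theorem polytabloid_swap_smul_of_apply_eq (A B : Finset α) {u v : α} (hu : σ u = u)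
    (hv : σ v = v) : polytabloid (A.filter fun x ↦ σ x ≠ x) σ (swap u v • B) =
      polytabloid (A.filter fun x ↦ σ x ≠ x) σ B := by
  have hne {w : α} (hw : σ w = w) : ∀ x ∈ A.filter fun x ↦ σ x ≠ x, σ x ≠ w := fun x hx h ↦
    (mem_filter.mp hx).2 (σ.injective (h ▸ hw))
  exact polytabloid_swap_smul_of_notMem (fun h ↦ (mem_filter.mp h).2 hu)
    (fun h ↦ (mem_filter.mp h).2 hv) (hne hu) (hne hv)

end AlternatesAlong

section TwoRowTableau

variable {α K : Type*} [DecidableEq α] {m : ℕ} [Field K] [CharZero K] {σ : Perm α}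
  {g : Set.powersetCard α m → K}

theorem AlternatesAlong.eq_zero (hg : AlternatesAlong σ g) {x : α} (hx : σ x ≠ x)
    {B : Set.powersetCard α m} (h : x ∈ (B : Finset α) ↔ σ x ∈ (B : Finset α)) : g B = 0 := by
  have hself : swap x (σ x) • B = B := Subtype.ext (swap_smul_eq_self h)
  simpa [hself, self_eq_neg] using hg x hx B

theorem AlternatesAlong.isColumnTransversal (hg : AlternatesAlong σ g)
    {B : Set.powersetCard α m} (hB : g B ≠ 0) : IsColumnTransversal σ (B : Finset α) := by
  intro x hx
  by_contra h
  exact hB (hg.eq_zero hx (by tauto))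

theorem AlternatesAlong.exists_swap_smul_ne_zero (hg : AlternatesAlong σ g)
    (hsymm : ∀ u v, σ u = u → σ v = v → ∀ B, g (swap u v • B) = g B)
    {A B : Set.powersetCard α m} (hA : IsColumnTransversal σ A)
    (hAB : A ≠ B) (hB : g B ≠ 0) :
    ∃ u ∈ (A \ B : Finset α), ∃ v ∈ (B \ A : Finset α), g (swap u v • B) ≠ 0 := by
  have hcard : #(A : Finset α) = #(B : Finset α) := A.2.trans B.2.symm
  obtain ⟨u, hu⟩ : (A \ B : Finset α).Nonempty := sdiff_nonempty.mpr fun h ↦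
    hAB (Subtype.ext (eq_of_subset_of_card_le h hcard.ge))
  obtain ⟨v, hv⟩ : (B \ A : Finset α).Nonempty := sdiff_nonempty.mpr fun h ↦
    hAB (Subtype.ext (eq_of_subset_of_card_le h hcard.le).symm)
  have hmoved {x : α} (hx : σ x ≠ x) : g (swap x (σ x) • B) ≠ 0 := by
    rwa [hg x hx, neg_ne_zero]
  have hBcol : IsColumnTransversal σ B := hg.isColumnTransversal hB
  simp only [mem_sdiff] at hu hv ⊢
  by_cases hσu : σ u = u
  · by_cases hσv : σ v = v
    · exact ⟨u, hu, v, hv, by rwa [hsymm u v hσu hσv]⟩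
    · exact ⟨σ v, ⟨(hA v hσv).mpr hv.2, fun h ↦ (hBcol v hσv).mp h hv.1⟩, v, hv,
        swap_comm v (σ v) ▸ hmoved hσv⟩
  · exact ⟨u, hu, σ u, ⟨(hBcol u hσu).mpr hu.2, fun h ↦ (hA u hσu).mp h hu.1⟩, hmoved hσu⟩

theorem AlternatesAlong.eq_zero_of_apply_eq_zero (hg : AlternatesAlong σ g)
    (hsymm : ∀ u v, σ u = u → σ v = v → ∀ B, g (swap u v • B) = g B)
    {A : Set.powersetCard α m} (hA : IsColumnTransversal σ A) (hgA : g A = 0) :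
    g = 0 := by
  by_contra hne
  obtain ⟨B, hB, hmin⟩ := exists_minimalFor_of_wellFoundedLT (fun B ↦ g B ≠ 0)
    (fun B ↦ #(A \ B : Finset α)) (Function.ne_iff.mp hne)
  have hAB : A ≠ B := by rintro rfl; exact hB hgA
  obtain ⟨u, hu, v, hv, hswap⟩ := hg.exists_swap_smul_ne_zero hsymm hA hAB hB
  have hlt := card_sdiff_swap_smul_lt hu hv
  exact hlt.not_ge (hmin hswap hlt.le)

theorem exists_polytabloid_mem [Fintype α] {V : Submodule K (Set.powersetCard α m → K)}
    (hV : V ≠ ⊥) (hinv : ∀ π : Perm α, ∀ g ∈ V, (fun B ↦ g (π • B)) ∈ V) :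
    ∃ (A : Set.powersetCard α m) (X : Finset α) (σ : α → α), X ⊆ A ∧
      Set.MapsTo σ X (↑(A : Finset α)ᶜ : Set α) ∧ Set.InjOn σ X ∧
      (fun B : Set.powersetCard α m ↦ (polytabloid X σ B : K)) ∈ V := by
  obtain ⟨σ, hσ, g, hgV, hg, halt, hsymm⟩ := exists_mem_alternatesAlong hV hinv
  obtain ⟨A, hgA⟩ := Function.ne_iff.mp hg
  have hA : IsColumnTransversal σ A := halt.isColumnTransversal hgA
  let X : Finset α := {x ∈ (A : Finset α) | σ x ≠ x}
  let f (B : Set.powersetCard α m) : K := polytabloid X σ B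
  have hXA : X ⊆ A := filter_subset _ _
  have hσA : ∀ x ∈ X, σ x ∉ (A : Finset α) := fun x hx ↦ hA.apply_notMem hx
  have hfA : f A = 1 := by simp [f, polytabloid_eq_one hXA hσA]
  have hfalt : AlternatesAlong σ f := hA.alternatesAlong_polytabloid hσ
  have hdiff : g - g A • f = 0 := by
    refine AlternatesAlong.eq_zero_of_apply_eq_zero (fun x hx B ↦ ?_) (fun u v hu hv B ↦ ?_)
      hA (by simp [hfA])
    · simp only [Pi.sub_apply, Pi.smul_apply, halt x hx, hfalt x hx, smul_eq_mul]
      ring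
    · simp only [Pi.sub_apply, Pi.smul_apply, hsymm u v hu hv, f, Set.powersetCard.coe_smul,
        X, polytabloid_swap_smul_of_apply_eq _ _ hu hv]
  refine ⟨A, X, σ, hXA, fun x hx ↦ mem_coe.mpr (mem_compl.mpr (hσA x hx)),
    σ.injective.injOn, ?_⟩
  exact (V.smul_mem_iff hgA).mp (sub_eq_zero.mp hdiff ▸ hgV)

end TwoRowTableau

section PosSemidef

variable {α : Type*} [Fintype α] [DecidableEq α] {m : ℕ}

theorem comp_smul_mem_eigenspace {K β : Type*} [CommRing K] [Fintype β] [DecidableEq β]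
    {G : Type*} [Group G] [MulAction G β] {M : Matrix β β K}
    (hM : ∀ (π : G) A B, M (π • A) (π • B) = M A B) {μ : K} {g : β → K}
    (hg : g ∈ Module.End.eigenspace M.toLin' μ) (π : G) :
    (fun B ↦ g (π • B)) ∈ Module.End.eigenspace M.toLin' μ := by
  rw [Module.End.mem_eigenspace_iff, Matrix.toLin'_apply] at hg ⊢
  ext A
  have hA := congrFun hg (π • A)
  rw [Matrix.mulVec, dotProduct, ← Equiv.sum_comp (MulAction.toPerm π)] at hA
  simpa [Matrix.mulVec, dotProduct, hM] using hA

theorem posSemidef_of_polytabloid_mulVec_nonneg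
    {M : Matrix (Set.powersetCard α m) (Set.powersetCard α m) ℝ} (hM : M.IsHermitian)
    (hinv : ∀ (π : Perm α) A B, M (π • A) (π • B) = M A B)
    (hnonneg : ∀ (A : Set.powersetCard α m) (X : Finset α) (σ : α → α), X ⊆ A →
      Set.MapsTo σ X (↑(A : Finset α)ᶜ : Set α) → Set.InjOn σ X →
      0 ≤ M.mulVec (fun B ↦ (polytabloid X σ B : ℝ)) A) :
    M.PosSemidef := by
  refine hM.posSemidef_iff_eigenvalues_nonneg.mpr fun i ↦ ?_
  rw [Pi.zero_apply]
  have hne : Module.End.eigenspace M.toLin' (hM.eigenvalues i) ≠ ⊥ := by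
    refine (Submodule.ne_bot_iff _).mpr ⟨hM.eigenvectorBasis i, ?_, ?_⟩
    · exact Module.End.mem_eigenspace_iff.mpr (hM.mulVec_eigenvectorBasis i)
    · simpa using hM.eigenvectorBasis.orthonormal.ne_zero i
  obtain ⟨A, X, σ, hXA, hσ, hinj, hmem⟩ :=
    exists_polytabloid_mem hne fun π g hg ↦ comp_smul_mem_eigenspace hinv hg π
  have hval := congrFun (Module.End.mem_eigenspace_iff.mp hmem) A
  have hone : polytabloid X σ A = 1 :=
    polytabloid_eq_one hXA fun x hx ↦ mem_compl.mp (mem_coe.mp (hσ hx))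
  rw [Matrix.toLin'_apply, Pi.smul_apply, hone, Int.cast_one, smul_eq_mul, mul_one] at hval
  exact hval ▸ hnonneg A X σ hXA hσ hinj

end PosSemidef

section RatioBound

variable {V : Type*} [DecidableEq V] (G : SimpleGraph V) [DecidableRel G.Adj]

/-- The adjacency matrix shifted by `μ` on the diagonal and by `-c` everywhere. For a regular graph,
`μ` is chosen to cancel the least eigenvalue and `c` the eigenvalue of the constant functions. -/
def shiftedAdjMatrix (μ c : ℝ) : Matrix V V ℝ :=
  G.adjMatrix ℝ + μ • 1 - c • Matrix.of fun _ _ ↦ 1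

theorem isHermitian_shiftedAdjMatrix (μ c : ℝ) : (shiftedAdjMatrix G μ c).IsHermitian := by
  ext u v
  simp [shiftedAdjMatrix, Matrix.one_apply, G.adj_comm, eq_comm]

variable [Fintype V]

theorem shiftedAdjMatrix_mulVec_apply (μ c : ℝ) (f : V → ℝ) (v : V) :
    (shiftedAdjMatrix G μ c).mulVec f v =
      ∑ u ∈ G.neighborFinset v, f u + μ * f v - c * ∑ u, f u := by
  have hones : (Matrix.of fun _ _ : V ↦ (1 : ℝ)).mulVec f v = ∑ u, f u := by
    simp [Matrix.mulVec, dotProduct]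
  simp only [shiftedAdjMatrix, Matrix.sub_mulVec, Matrix.add_mulVec, Matrix.smul_mulVec,
    Matrix.one_mulVec, Pi.sub_apply, Pi.add_apply, Pi.smul_apply, smul_eq_mul,
    SimpleGraph.adjMatrix_mulVec_apply, hones]

variable {G}

theorem mul_card_le_of_posSemidef_shiftedAdjMatrix {μ c e : ℝ}
    (hG : (shiftedAdjMatrix G μ c).PosSemidef) {S : Finset V} (hS : S.Nonempty)
    (hdeg : ∀ v ∈ S, #{u ∈ G.neighborFinset v | u ∈ S} ≤ e) : c * #S ≤ e + μ := by
  have hrow : ∀ v ∈ S, (shiftedAdjMatrix G μ c).mulVec (fun u ↦ if u ∈ S then 1 else 0) v ≤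
      e + μ - c * #S := fun v hv ↦ by
    have := hdeg v hv
    rw [shiftedAdjMatrix_mulVec_apply, sum_boole, sum_boole, if_pos hv]
    simp only [filter_univ_mem, mul_one]
    linarith
  have hquad : 0 ≤ ∑ v ∈ S, (shiftedAdjMatrix G μ c).mulVec (fun u ↦ if u ∈ S then 1 else 0) v := by
    simpa [dotProduct, sum_ite_mem] using
      hG.dotProduct_mulVec_nonneg fun u ↦ if u ∈ S then (1 : ℝ) else 0
  have hsum := hquad.trans (sum_le_card_nsmul S _ _ hrow)
  rw [nsmul_eq_mul] at hsum
  linarith [nonneg_of_mul_nonneg_right hsum (Nat.cast_pos.mpr hS.card_pos)]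

end RatioBound

section GeneralizedJohnson

variable {α : Type*} [DecidableEq α] {m i : ℕ}

variable (α m i) in
/-- The generalized Johnson graph: vertices are the `m`-subsets of `α`, and two distinct ones are
adjacent when they share exactly `i` points. -/
def generalizedJohnson : SimpleGraph (Set.powersetCard α m) where
  Adj A B := A ≠ B ∧ #(A ∩ B : Finset α) = i
  symm.symm _ _ h := ⟨h.1.symm, by rw [inter_comm]; exact h.2⟩
  loopless := ⟨fun _ h ↦ h.1 rfl⟩

instance : DecidableRel (generalizedJohnson α m i).Adj :=
  fun A B ↦ inferInstanceAs (Decidable (A ≠ B ∧ #(A ∩ B : Finset α) = i))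

theorem generalizedJohnson_adj_iff (hi : i ≠ m) {A B : Set.powersetCard α m} :
    (generalizedJohnson α m i).Adj A B ↔ #(A ∩ B : Finset α) = i := by
  refine and_iff_right_of_imp ?_
  rintro h rfl
  rw [inter_self] at h
  exact hi (h.symm.trans A.2)

theorem generalizedJohnson_smul_adj (π : Perm α) (A B : Set.powersetCard α m) :
    (generalizedJohnson α m i).Adj (π • A) (π • B) ↔ (generalizedJohnson α m i).Adj A B := by
  simp only [generalizedJohnson, ne_eq, smul_left_cancel_iff, Set.powersetCard.coe_smul,
    ← smul_finset_inter, card_smul_finset]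

variable [Fintype α]

theorem sum_neighborFinset_generalizedJohnson {M : Type*} [AddCommMonoid M] (hi : i < m)
    (A : Set.powersetCard α m) (f : Finset α → M) :
    ∑ B ∈ (generalizedJohnson α m i).neighborFinset A, f B =
      ∑ P ∈ powersetCard i A, ∑ Q ∈ powersetCard (m - i) (A : Finset α)ᶜ, f (P ∪ Q) := by
  have hunion (B : Finset α) : (A : Finset α) ∩ B ∪ B \ A = B := by grind
  rw [← sum_product']
  refine sum_nbij (fun B ↦ (↑A ∩ ↑B, ↑B \ ↑A)) (fun B hB ↦ ?_) (fun B _ C _ h ↦ ?_)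
    (fun PQ hPQ ↦ ?_) fun B _ ↦ by rw [hunion]
  · rw [SimpleGraph.mem_neighborFinset, generalizedJohnson_adj_iff hi.ne] at hB
    have hsdiff := card_sdiff_add_card_inter (B : Finset α) A
    rw [inter_comm, hB, B.2] at hsdiff
    exact mem_product.mpr ⟨mem_powersetCard.mpr ⟨inter_subset_left, hB⟩,
      mem_powersetCard.mpr ⟨by grind [mem_compl], by lia⟩⟩
  · obtain ⟨hinter, hsdiff⟩ := Prod.mk.inj h
    exact Subtype.ext (by rw [← hunion B, ← hunion C, hinter, hsdiff])
  · obtain ⟨⟨hPA, hP⟩, hQA, hQ⟩ :=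
      (mem_product.mp (mem_coe.mp hPQ)).imp mem_powersetCard.mp mem_powersetCard.mp
    have hdisj : Disjoint PQ.1 PQ.2 := disjoint_compl_right.mono hPA hQA
    have hcard : #(PQ.1 ∪ PQ.2) = m := by rw [card_union_of_disjoint hdisj]; lia
    have hinter : (A : Finset α) ∩ (PQ.1 ∪ PQ.2) = PQ.1 := by grind [mem_compl]
    have hsdiff : (PQ.1 ∪ PQ.2) \ A = PQ.2 := by grind [mem_compl]
    refine ⟨⟨PQ.1 ∪ PQ.2, hcard⟩, ?_, Prod.ext hinter hsdiff⟩
    rw [mem_coe, SimpleGraph.mem_neighborFinset, generalizedJohnson_adj_iff hi.ne]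
    exact hinter.symm ▸ hP

theorem degree_generalizedJohnson (hi : i < m) (A : Set.powersetCard α m) :
    (generalizedJohnson α m i).degree A =
      m.choose i * (Fintype.card α - m).choose (m - i) := by
  rw [← SimpleGraph.card_neighborFinset_eq_degree, card_eq_sum_ones,
    sum_neighborFinset_generalizedJohnson hi A fun _ ↦ 1]
  simp [card_compl, show #(A : Finset α) = m from A.2]

theorem sum_polytabloid_eq_zero {X : Finset α} {σ : α → α} (hX : X.Nonempty)
    (hinj : Set.InjOn σ X) (hσ : ∀ y ∈ X, σ y ∉ X) :
    ∑ B : Set.powersetCard α m, polytabloid X σ B = 0 := by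
  obtain ⟨x, hx⟩ := hX
  have hswap := Equiv.sum_comp (MulAction.toPerm (swap x (σ x)))
    fun B : Set.powersetCard α m ↦ polytabloid X σ B
  simp only [MulAction.toPerm_apply, Set.powersetCard.coe_smul,
    polytabloid_swap_smul_of_mem hinj hσ hx, sum_neg_distrib] at hswap
  exact self_eq_neg.mp hswap.symm

theorem posSemidef_shiftedAdjMatrix_generalizedJohnson {k r : ℕ}
    (hα : Fintype.card α = 2 * k + r) (hr : r < 2 * k) {μ c : ℝ}
    (hμ : 2 * r * μ = (2 * k - r) * ((2 * k).choose k * r.choose k))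
    (hc : c * (2 * k + r).choose (2 * k) = (2 * k).choose k * r.choose k + μ) :
    (shiftedAdjMatrix (generalizedJohnson α (2 * k) k) μ c).PosSemidef := by
  refine posSemidef_of_polytabloid_mulVec_nonneg (isHermitian_shiftedAdjMatrix _ μ c)
    (fun π A B ↦ ?_) fun A X σ hXA hσ hinj ↦ ?_
  · simp [shiftedAdjMatrix, Matrix.one_apply, generalizedJohnson_smul_adj]
  have hR : #(A : Finset α)ᶜ = r := by
    rw [card_compl, show #(A : Finset α) = 2 * k from A.2]; lia
  have hself : polytabloid X σ A = 1 :=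
    polytabloid_eq_one hXA fun x hx ↦ mem_compl.mp (mem_coe.mp (hσ hx))
  rw [shiftedAdjMatrix_mulVec_apply, hself, Int.cast_one, mul_one]
  rcases X.eq_empty_or_nonempty with rfl | hX
  · have hcard : Fintype.card (Set.powersetCard α (2 * k)) = (2 * k + r).choose (2 * k) := by
      rw [← Nat.card_eq_fintype_card, Set.powersetCard.card, Nat.card_eq_fintype_card, hα]
    have hdegree := degree_generalizedJohnson (show k < 2 * k by lia) A
    rw [hα, Nat.add_sub_cancel_left, show 2 * k - k = k by lia] at hdegree
    simp only [polytabloid, prod_empty, Int.cast_one, sum_const, nsmul_one, card_univ, hcard,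
      SimpleGraph.card_neighborFinset_eq_degree, hdegree, Nat.cast_mul, hc, sub_self, le_refl]
  · have hσX : ∀ x ∈ X, σ x ∉ X := fun x hx h ↦ mem_compl.mp (mem_coe.mp (hσ hx)) (hXA h)
    have hr₀ : 0 < r := hR ▸ card_pos.mpr (hX.elim fun x hx ↦ ⟨σ x, hσ hx⟩)
    have hbound := two_mul_abs_sum_polytabloid_le A.2 disjoint_compl_right (hR ▸ hr) hXA hX hσ hinj
    rw [← Int.cast_sum, ← Int.cast_sum, sum_polytabloid_eq_zero hX hinj hσX,
      sum_neighborFinset_generalizedJohnson (show k < 2 * k by lia) A, show 2 * k - k = k by lia]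
    rw [hR] at hbound
    set s := ∑ P ∈ powersetCard k A, ∑ Q ∈ powersetCard k (A : Finset α)ᶜ, polytabloid X σ (P ∪ Q)
    have hs : 2 * r * |(s : ℝ)| ≤ 2 * r * μ := hμ ▸ mod_cast hbound
    rw [Int.cast_zero, mul_zero, sub_zero]
    linarith [neg_abs_le (s : ℝ), le_of_mul_le_mul_left hs (by positivity)]

theorem card_mul_card_le_of_two_mul_card_filter_neighborFinset_le {k : ℕ}
    (hk : 3 * k ≤ Fintype.card α) (hk' : Fintype.card α < 4 * k)
    {S : Finset (Set.powersetCard α (2 * k))}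
    (hS : ∀ A ∈ S, 2 * #{B ∈ (generalizedJohnson α (2 * k) k).neighborFinset A | B ∈ S} ≤
      (generalizedJohnson α (2 * k) k).degree A) :
    Fintype.card α * #S ≤ 2 * k * (Fintype.card α).choose (2 * k) := by
  rcases S.eq_empty_or_nonempty with rfl | hSne
  · simp
  obtain ⟨r, hr⟩ : ∃ r, Fintype.card α = 2 * k + r := ⟨Fintype.card α - 2 * k, by lia⟩
  let d : ℝ := (2 * k).choose k * r.choose k
  let N : ℝ := (2 * k + r).choose (2 * k)
  let μ : ℝ := (2 * k - r) * d / (2 * r)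
  have hd : 0 < d := mul_pos (Nat.cast_pos.mpr (Nat.choose_pos (by lia)))
    (Nat.cast_pos.mpr (Nat.choose_pos (by lia)))
  have hN : 0 < N := Nat.cast_pos.mpr (Nat.choose_pos (by lia))
  have hr₀ : (0 : ℝ) < r := Nat.cast_pos.mpr (by lia)
  have hdeg : ∀ A ∈ S, #{B ∈ (generalizedJohnson α (2 * k) k).neighborFinset A | B ∈ S} ≤
      d / 2 := fun A hA ↦ by
    have hA := hS A hA
    rw [degree_generalizedJohnson (by lia), hr, Nat.add_sub_cancel_left,
      show 2 * k - k = k by lia] at hA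
    rw [le_div_iff₀' two_pos]
    simp only [d]
    exact_mod_cast hA
  have hratio : (d + μ) / N * #S ≤ d / 2 + μ :=
    mul_card_le_of_posSemidef_shiftedAdjMatrix
      (posSemidef_shiftedAdjMatrix_generalizedJohnson hr (by lia)
        (mul_div_cancel₀ _ (by positivity)) (div_mul_cancel₀ _ hN.ne')) hSne hdeg
  have hdμ : d + μ = d * (2 * k + r) / (2 * r) := by simp only [μ]; field_simp; ring
  have hdμ' : d / 2 + μ = d * (2 * k) / (2 * r) := by simp only [μ]; field_simp; ring
  have hbound : (2 * k + r) * (#S : ℝ) ≤ 2 * k * N := by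
    rw [hdμ, hdμ'] at hratio
    field_simp at hratio
    linarith
  rw [hr]
  simp only [N] at hbound
  exact_mod_cast hbound

end GeneralizedJohnson

section SymmDiffTriangleFree

variable {α : Type*} [DecidableEq α] {F : Finset (Finset α)} {k : ℕ}

/-- A family of sets without three distinct members whose triple symmetric difference is empty. -/
def SymmDiffTriangleFree (F : Finset (Finset α)) : Prop :=
  ∀ A ∈ F, ∀ B ∈ F, ∀ C ∈ F, A ≠ B → A ≠ C → B ≠ C → A ∆ B ∆ C ≠ ∅

theorem SymmDiffTriangleFree.symmDiff_notMem (hF : SymmDiffTriangleFree F) {A B : Finset α}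
    (hA : A ∈ F) (hB : B ∈ F) (hA₀ : A ≠ ∅) (hB₀ : B ≠ ∅) (hAB : A ≠ B) : A ∆ B ∉ F := fun hC ↦
  hF A hA B hB (A ∆ B) hC hAB (fun h ↦ hB₀ (symmDiff_eq_left.mp h.symm))
    (fun h ↦ hA₀ (symmDiff_eq_right.mp h.symm)) (symmDiff_self _)

theorem exists_generalizedJohnson_adj_coe_eq_symmDiff (hk : 0 < k)
    {A B : Set.powersetCard α (2 * k)} (hAB : (generalizedJohnson α (2 * k) k).Adj A B) :
    ∃ C, (generalizedJohnson α (2 * k) k).Adj A C ∧ (C : Finset α) = ↑A ∆ ↑B := by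
  simp only [generalizedJohnson_adj_iff (show k ≠ 2 * k by lia)] at hAB ⊢
  have hA : #(A \ B : Finset α) = k := by
    have := card_sdiff_add_card_inter (A : Finset α) B
    rw [hAB, A.2] at this
    lia
  have hB : #(B \ A : Finset α) = k := by
    have := card_sdiff_add_card_inter (B : Finset α) A
    rw [inter_comm, hAB, B.2] at this
    lia
  have hcard : #((A : Finset α) ∆ B) = 2 * k := by
    rw [symmDiff_def, sup_eq_union, card_union_of_disjoint disjoint_sdiff_sdiff, hA, hB, two_mul]
  refine ⟨⟨_, hcard⟩, ?_, rfl⟩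
  rw [show (A : Finset α) ∩ ↑A ∆ ↑B = ↑A \ ↑B by grind [mem_symmDiff], hA]

variable [Fintype α]

theorem SymmDiffTriangleFree.two_mul_card_filter_neighborFinset_le (hF : SymmDiffTriangleFree F)
    (hk : 0 < k) {A : Set.powersetCard α (2 * k)} (hA : (A : Finset α) ∈ F) :
    2 * #{B ∈ (generalizedJohnson α (2 * k) k).neighborFinset A | B.1 ∈ F} ≤
      (generalizedJohnson α (2 * k) k).degree A := by
  have hsplit := card_filter_add_card_filter_not
    (s := (generalizedJohnson α (2 * k) k).neighborFinset A) fun B ↦ B.1 ∈ F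
  rw [← SimpleGraph.card_neighborFinset_eq_degree, ← hsplit, two_mul]
  have hne (B : Set.powersetCard α (2 * k)) : (B : Finset α) ≠ ∅ :=
    card_ne_zero.mp (by rw [B.2]; lia) |>.ne_empty
  refine Nat.add_le_add_left (card_le_card_of_forall_subsingleton
    (fun B C ↦ C.1 = ↑A ∆ ↑B) (fun B hB ↦ ?_) fun C _ B hB B' hB' ↦ ?_) _
  · obtain ⟨hAB, hBF⟩ := mem_filter.mp hB
    rw [SimpleGraph.mem_neighborFinset] at hAB
    obtain ⟨C, hAC, hC⟩ := exists_generalizedJohnson_adj_coe_eq_symmDiff hk hAB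
    refine ⟨C, mem_filter.mpr ⟨(SimpleGraph.mem_neighborFinset ..).mpr hAC, ?_⟩, hC⟩
    rw [hC]
    exact hF.symmDiff_notMem hA hBF (hne A) (hne B) fun h ↦ hAB.ne (Subtype.ext h)
  · exact Subtype.ext (symmDiff_right_injective _ (hB.2.symm.trans hB'.2))

theorem SymmDiffTriangleFree.card_mul_card_le (hF : SymmDiffTriangleFree F)
    (hcard : ∀ A ∈ F, #A = 2 * k) (hk : 3 * k ≤ Fintype.card α) (hk' : Fintype.card α < 4 * k) :
    Fintype.card α * #F ≤ 2 * k * (Fintype.card α).choose (2 * k) := by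
  let S : Finset (Set.powersetCard α (2 * k)) := {A | A.1 ∈ F}
  have hSF : #S = #F := card_nbij Subtype.val (fun A hA ↦ (mem_filter.mp hA).2)
    Subtype.val_injective.injOn fun A hA ↦ ⟨⟨A, hcard A hA⟩, by simpa [S] using hA, rfl⟩
  rw [← hSF]
  refine card_mul_card_le_of_two_mul_card_filter_neighborFinset_le hk hk' fun A hA ↦ ?_
  simpa only [S, mem_filter_univ] using
    hF.two_mul_card_filter_neighborFinset_le (by lia) (mem_filter.mp hA).2

end SymmDiffTriangleFree

/-- **Frankl's triangle problem, uniform version, small `n`.** Let `k ≥ 1` and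
`3k ≤ n ≤ 4k - 1`. If `F` is a family of `2k`-element subsets of an `n`-element ground set
containing no three pairwise distinct members `A, B, C` with empty triple symmetric
difference `A ∆ B ∆ C = ∅`, then `|F| ≤ C(n-1, 2k-1)`. -/
theorem frankl_triangle_uniform (k n : ℕ) (hk : 1 ≤ k)
    (hn1 : 3 * k ≤ n) (hn2 : n ≤ 4 * k - 1)
    (F : Finset (Finset (Fin n)))
    (hcard : ∀ A ∈ F, A.card = 2 * k)
    (hfree : ∀ A ∈ F, ∀ B ∈ F, ∀ C ∈ F, A ≠ B → A ≠ C → B ≠ C →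
      symmDiff (symmDiff A B) C ≠ ∅) :
    F.card ≤ (n - 1).choose (2 * k - 1) := by
  have hbound : n * #F ≤ 2 * k * n.choose (2 * k) := by
    simpa only [Fintype.card_fin] using
      SymmDiffTriangleFree.card_mul_card_le hfree hcard (by rwa [Fintype.card_fin])
        (by rw [Fintype.card_fin]; lia)
  refine Nat.le_of_mul_le_mul_left ?_ (show 0 < n by lia)
  have habsorb := Nat.add_one_mul_choose_eq (n - 1) (2 * k - 1)
  rw [Nat.sub_add_cancel (by lia), Nat.sub_add_cancel (by lia)] at habsorb
  rw [habsorb, mul_comm (n.choose _)]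
  exact hbound
end

section
/- Let k ≥ 1 and n ≥ 4k. If F is a family of 2k-element subsets of {1,…,n} that contains no three pairwise distinct members A, B, C with empty triple symmetric difference A Δ B Δ C = ∅, then (4k - 1)·|F| ≤ 2k·C(n, 2k), i.e. |F| ≤ (2k/(4k-1))·(n choose 2k). -/
/-!
Averaging over the `4k`-subsets `Y` of the ground set reduces the bound to families of `2k`-subsets
of a `4k`-set `Y`. On these, join `A` and `B` when `|A ∩ B| = k`; this graph is regular of degree
`d = C(2k, k)²`. If `F` is triangle-free and `A ∈ F`, then `B ↦ A ∆ B` maps the neighbours of `A`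
in `F` injectively to neighbours outside `F`, so every degree inside `F` is at most `d / 2`.
Hoffman's bound gives the claim once every eigenvalue `μ` with an eigenvector `f` orthogonal to the
constants satisfies `|μ| ≤ d / (4k - 2)`.

To bound `μ`, take an inclusion-minimal `S` with `∑_{A ⊇ S} f A ≠ 0`. By minimality, pairing `f`
with a function of `A ∩ S` only sees the Möbius transform of that function at `S`, so applying the
matrix to one such function computes `μ`. If `|S| < 2k`, the function `(-1) ^ |A ∩ S|` expresses `μ`
through products of Krawtchouk numbers `K(a) K(|S| - a)`, which vanish for odd `a` and are at most
`d / (2k - 1)` for even `a`; the parity restriction gains the missing factor `2`. If `|S| = 2k`, the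
indicator of `A = S` gives `μ = ± C(2k, k)`.
-/

namespace FranklTriangle

open Finset Matrix Polynomial

section Krawtchouk

lemma four_mul_le_centralBinom_add_two (k : ℕ) : 4 * k ≤ k.centralBinom + 2 := by
  induction k with
  | zero => simp
  | succ k ih =>
    have hrec := Nat.succ_mul_centralBinom_succ k
    have hk : k + 1 ≤ k.centralBinom := by
      rcases k.eq_zero_or_pos with rfl | hpos
      · simp
      · omega
    nlinarith

/-- The value at `r` of the Krawtchouk polynomial of degree `k` on `n` points, encoded as the
coefficient of `X ^ k` in its generating function; it is meaningful for `r ≤ n`. -/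
noncomputable def krawtchouk (n k r : ℕ) : ℝ :=
  ((1 - X : ℝ[X]) ^ r * (1 + X) ^ (n - r)).coeff k

lemma krawtchouk_zero (n k : ℕ) : krawtchouk n k 0 = n.choose k := by
  simp [krawtchouk, coeff_one_add_X_pow]

lemma krawtchouk_sub (k : ℕ) {n r : ℕ} (hr : r ≤ n) :
    krawtchouk n k (n - r) = (-1) ^ k * krawtchouk n k r := by
  have hreflect : (1 - X : ℝ[X]) ^ (n - r) * (1 + X) ^ (n - (n - r)) =
      ((1 - X : ℝ[X]) ^ r * (1 + X) ^ (n - r)).comp (C (-1) * X) := by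
    simp [Nat.sub_sub_self hr, mul_comm, ← sub_eq_add_neg]
  rw [krawtchouk, hreflect, comp_C_mul_X_coeff, krawtchouk, mul_comm]

lemma coeff_X_mul_derivative {R : Type*} [Semiring R] (P : R[X]) (k : ℕ) :
    (X * derivative P).coeff k = P.coeff k * k := by
  cases k with
  | zero => simp
  | succ k => simp [coeff_derivative]

lemma krawtchouk_recurrence (k : ℕ) {n r : ℕ} (hr : r < n) :
    r * krawtchouk n k (r - 1) + (n - r) * krawtchouk n k (r + 1) =
      (n - 2 * k) * krawtchouk n k r := by
  obtain ⟨m, rfl⟩ : ∃ m, n = r + (m + 1) := Nat.exists_eq_add_of_lt hr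
  set P : ℝ[X] := (1 - X) ^ r * (1 + X) ^ (m + 1) with hP
  have hEuler : (r : ℝ[X]) * ((1 - X) ^ (r - 1) * (1 + X) ^ (r + (m + 1) - (r - 1))) +
      ((m + 1 : ℕ) : ℝ[X]) * ((1 - X) ^ (r + 1) * (1 + X) ^ m) =
        ((r + (m + 1) : ℕ) : ℝ[X]) * P - ((2 : ℕ) : ℝ[X]) * (X * derivative P) := by
    rcases r with _ | r
    · simp only [hP, derivative_pow, derivative_add, derivative_one, derivative_X, map_natCast,
        Nat.add_sub_cancel, pow_zero, one_mul, zero_add, mul_one, pow_one]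
      push_cast
      ring
    · simp only [hP, derivative_mul, derivative_pow, derivative_add, derivative_sub,
        derivative_one, derivative_X, map_natCast, Nat.add_sub_cancel,
        show r + 1 + (m + 1) - r = m + 2 by omega]
      push_cast
      ring
  have hcoeff := congrArg (coeff · k) hEuler
  simp only [coeff_add, coeff_sub, coeff_natCast_mul, coeff_X_mul_derivative] at hcoeff
  simp only [krawtchouk, Nat.add_sub_cancel_left, show r + (m + 1) - (r + 1) = m by omega]
  push_cast at hcoeff ⊢
  linear_combination hcoeff

lemma abs_krawtchouk_middle_add_two {k r : ℕ} (hr : r + 2 ≤ 2 * k) :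
    (2 * k - (r + 1)) * |krawtchouk (2 * k) k (r + 2)| = (r + 1) * |krawtchouk (2 * k) k r| := by
  have hrec := krawtchouk_recurrence k (n := 2 * k) (r := r + 1) (by omega)
  have hr' : (r : ℝ) + 2 ≤ 2 * k := mod_cast hr
  have hneg : (2 * k - (r + 1)) * krawtchouk (2 * k) k (r + 2) =
      -((r + 1) * krawtchouk (2 * k) k r) := by
    rw [Nat.add_sub_cancel] at hrec
    push_cast at hrec
    linarith
  have habs := congrArg abs hneg
  rwa [abs_neg, abs_mul, abs_mul, abs_of_nonneg (by linarith : (0 : ℝ) ≤ 2 * k - (r + 1)),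
    abs_of_nonneg (by positivity : (0 : ℝ) ≤ r + 1)] at habs

lemma krawtchouk_middle_of_odd {k r : ℕ} (hr : r < 2 * k) (hodd : Odd r) :
    krawtchouk (2 * k) k r = 0 := by
  obtain ⟨t, rfl⟩ := hodd
  induction t with
  | zero =>
    have hrec := krawtchouk_recurrence k (n := 2 * k) (r := 0) (by omega)
    have hk : (k : ℝ) ≠ 0 := by norm_cast; omega
    simpa [hk] using hrec
  | succ t ih =>
    rw [show 2 * (t + 1) + 1 = 2 * t + 1 + 2 by ring] at hr ⊢
    have hrec := abs_krawtchouk_middle_add_two hr.le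
    have hpos : (0 : ℝ) < 2 * k - ((2 * t + 1 : ℕ) + 1) := by
      rw [sub_pos]
      exact_mod_cast (by omega : 2 * t + 2 < 2 * k)
    simpa only [ih (by omega), abs_zero, mul_zero, mul_eq_zero, hpos.ne', false_or, abs_eq_zero]
      using hrec

lemma abs_krawtchouk_middle_add_two_le {k r : ℕ} (hr : r + 2 ≤ k) :
    |krawtchouk (2 * k) k (r + 2)| ≤ |krawtchouk (2 * k) k r| := by
  have hr' : (r : ℝ) + 2 ≤ k := mod_cast hr
  have hpos : (0 : ℝ) < r + 1 := by positivity
  refine le_of_mul_le_mul_left ?_ hpos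
  rw [← abs_krawtchouk_middle_add_two (by omega)]
  exact mul_le_mul_of_nonneg_right (by linarith) (abs_nonneg _)

lemma two_mul_sub_one_mul_abs_krawtchouk_middle_le {k r : ℕ} (hr0 : 0 < r) (hr : r < 2 * k) :
    (2 * k - 1) * |krawtchouk (2 * k) k r| ≤ (2 * k).choose k := by
  wlog hrk : r ≤ k generalizing r
  · have hsymm := this (r := 2 * k - r) (by omega) (by omega) (by omega)
    rwa [krawtchouk_sub k hr.le, abs_mul, abs_pow, abs_neg, abs_one, one_pow, one_mul] at hsymm
  induction r using Nat.twoStepInduction with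
  | zero => omega
  | one => simp [krawtchouk_middle_of_odd hr odd_one]
  | more r ih _ =>
    rcases r.eq_zero_or_pos with rfl | hpos
    · simpa [krawtchouk_zero] using (abs_krawtchouk_middle_add_two hr.le).le
    · have hk : (1 : ℝ) ≤ k := by norm_cast; omega
      refine le_trans ?_ (ih hpos (by omega) (by omega))
      exact mul_le_mul_of_nonneg_left (abs_krawtchouk_middle_add_two_le hrk) (by linarith)

lemma abs_krawtchouk_middle_le {k r : ℕ} (hr : r < 2 * k) :
    |krawtchouk (2 * k) k r| ≤ (2 * k).choose k := by
  rcases r.eq_zero_or_pos with rfl | hr0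
  · simp [krawtchouk_zero]
  · refine le_trans ?_ (two_mul_sub_one_mul_abs_krawtchouk_middle_le hr0 hr)
    have hk : (1 : ℝ) ≤ k := by norm_cast; omega
    exact le_mul_of_one_le_left (abs_nonneg _) (by linarith)

lemma two_mul_sub_one_mul_abs_krawtchouk_middle_mul_le {k a b : ℕ} (hab : 0 < a + b)
    (hab' : a + b < 2 * k) :
    (2 * k - 1) * |krawtchouk (2 * k) k a * krawtchouk (2 * k) k b| ≤
      ((2 * k).choose k : ℝ) ^ 2 := by
  wlog ha : 0 < a generalizing a b
  · rw [mul_comm (krawtchouk _ _ a)]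
    exact this (by omega) (by omega) (by omega)
  rw [abs_mul, ← mul_assoc, sq]
  exact mul_le_mul (two_mul_sub_one_mul_abs_krawtchouk_middle_le ha (by omega))
    (abs_krawtchouk_middle_le (by omega)) (abs_nonneg _) (by positivity)

lemma sum_powersetCard_neg_one_pow_card_inter {α : Type*} [DecidableEq α] (N S : Finset α)
    (k : ℕ) :
    ∑ B ∈ N.powersetCard k, (-1 : ℝ) ^ #(B ∩ S) = krawtchouk #N k #(N ∩ S) := by
  have hprod : (1 - X : ℝ[X]) ^ #(N ∩ S) * (1 + X) ^ (#N - #(N ∩ S)) =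
      ∏ i ∈ N, (1 + (if i ∈ S then -X else X)) := by
    simp [apply_ite (1 + · : ℝ[X] → ℝ[X]), prod_ite, filter_mem_eq_inter, filter_notMem_eq_sdiff,
      card_sdiff, inter_comm S, sub_eq_add_neg]
  have hterm (B : Finset α) : ∏ i ∈ B, (if i ∈ S then -X else X : ℝ[X]) =
      C ((-1) ^ #(B ∩ S)) * X ^ #B := by
    simp [prod_ite, filter_mem_eq_inter, filter_notMem_eq_sdiff, neg_pow (X : ℝ[X]), mul_assoc,
      ← pow_add, card_inter_add_card_sdiff]
  rw [krawtchouk, hprod, prod_one_add, finsetSum_coeff, powersetCard_eq_filter, sum_filter]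
  simp only [hterm, coeff_C_mul_X_pow, eq_comm]

end Krawtchouk

section IntersectionSplitting

variable {α R : Type*} [DecidableEq α]

lemma sum_powersetCard_card_inter_eq_mul [CommSemiring R] {A Y : Finset α} (hA : A ⊆ Y) (i m : ℕ)
    (φ ψ : Finset α → R) :
    ∑ B ∈ Y.powersetCard (i + m) with #(A ∩ B) = i, φ (A ∩ B) * ψ (B \ A) =
      (∑ C ∈ A.powersetCard i, φ C) * ∑ D ∈ (Y \ A).powersetCard m, ψ D := by
  rw [sum_mul_sum, ← sum_product']
  refine sum_nbij' (fun B ↦ (A ∩ B, B \ A)) (fun P ↦ P.1 ∪ P.2) ?_ ?_ ?_ ?_ (fun _ _ ↦ rfl)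
  · intro B hB
    simp only [mem_filter, mem_powersetCard, mem_product] at hB ⊢
    have hsplit := card_inter_add_card_sdiff B A
    rw [inter_comm] at hsplit
    exact ⟨⟨inter_subset_left, hB.2⟩, sdiff_subset_sdiff hB.1.1 subset_rfl, by omega⟩
  · rintro ⟨C, D⟩ hCD
    simp only [mem_filter, mem_powersetCard, mem_product, subset_sdiff] at hCD ⊢
    obtain ⟨⟨hCA, hC⟩, ⟨hDY, hDA⟩, hD⟩ := hCD
    have hAD : A ∩ D = ∅ := disjoint_iff_inter_eq_empty.1 hDA.symm
    refine ⟨⟨union_subset (hCA.trans hA) hDY, ?_⟩, ?_⟩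
    · rw [card_union_of_disjoint (hDA.symm.mono_left hCA), hC, hD]
    · rw [inter_union_distrib_left, hAD, union_empty, inter_eq_right.2 hCA, hC]
  · intro B _
    grind
  · rintro ⟨C, D⟩ hCD
    simp only [mem_powersetCard, mem_product, subset_sdiff, disjoint_left] at hCD
    ext x <;> grind

lemma card_powersetCard_card_inter_eq {A Y : Finset α} (hA : A ⊆ Y) (i m : ℕ) :
    #{B ∈ Y.powersetCard (i + m) | #(A ∩ B) = i} = (#A).choose i * (#Y - #A).choose m := by
  simpa [card_sdiff_of_subset hA] using
    sum_powersetCard_card_inter_eq_mul hA i m (fun _ ↦ (1 : ℕ)) (fun _ ↦ 1)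

end IntersectionSplitting

section MinimalUpSum

variable {α ι R : Type*} [DecidableEq α] [Fintype ι]

/-- The zeta transform `S ↦ ∑_{s i ⊇ S} f i` of a function `f` on the index set of the family
`s`; an eigenvalue with eigenvector `f` is read off at an inclusion-minimal `S` where this is
nonzero. -/
def upSum [AddCommMonoid R] (s : ι → Finset α) (f : ι → R) (S : Finset α) : R :=
  ∑ i with S ⊆ s i, f i

/-- The Möbius transform of a function on the subsets of `S`, taken at `S`. -/
def alternatingSum [Ring R] (p : Finset α → R) (S : Finset α) : R :=
  ∑ U ∈ S.powerset, (-1) ^ #(S \ U) * p U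

lemma exists_minimal_upSum_ne_zero [AddCommMonoid R] {Y : Finset α} {m : ℕ}
    {f : Y.powersetCard m → R} (hf : f ≠ 0) :
    ∃ S ⊆ Y, #S ≤ m ∧ upSum Subtype.val f S ≠ 0 ∧ ∀ Q ⊂ S, upSum Subtype.val f Q = 0 := by
  obtain ⟨A, hA⟩ := Function.ne_iff.1 hf
  obtain ⟨hAY, hAm⟩ := mem_powersetCard.1 A.2
  have hup : upSum Subtype.val f A.1 = f A := by
    have hsingle : ({B | A.1 ⊆ B.1} : Finset (Y.powersetCard m)) = {A} := by
      ext B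
      have hBm := (mem_powersetCard.1 B.2).2
      simp only [mem_filter, mem_univ, true_and, mem_singleton, Subtype.ext_iff]
      exact ⟨fun h ↦ (eq_of_subset_of_card_le h (by omega)).symm, fun h ↦ h ▸ subset_rfl⟩
    rw [upSum, hsingle, sum_singleton]
  obtain ⟨S, hSA, hS⟩ := exists_minimal_le_of_wellFoundedLT
    (fun S ↦ upSum Subtype.val f S ≠ 0) A.1 (by rwa [hup])
  exact ⟨S, hSA.trans hAY, hAm ▸ card_le_card hSA, hS.prop,
    fun Q hQ ↦ not_not.1 (hS.not_prop_of_lt hQ)⟩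

variable [CommRing R] {s : ι → Finset α} {f : ι → R} {S : Finset α}

lemma sum_filter_inter_eq_of_upSum_eq_zero (h0 : ∀ Q ⊂ S, upSum s f Q = 0) {U : Finset α}
    (hU : U ⊆ S) :
    ∑ i with s i ∩ S = U, f i = (-1) ^ #(S \ U) * upSum s f S := by
  have hincl (i : ι) : ∑ Q ∈ (S \ U).powerset with Q ⊆ s i, (-1 : R) ^ #Q =
      if (S \ U) ∩ s i = ∅ then 1 else 0 := by
    have hQ : {Q ∈ (S \ U).powerset | Q ⊆ s i} = ((S \ U) ∩ s i).powerset := by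
      ext Q
      simp only [mem_filter, mem_powerset, subset_inter_iff]
    rw [hQ]
    exact_mod_cast congrArg (Int.cast : ℤ → R) sum_powerset_neg_one_pow_card
  calc ∑ i with s i ∩ S = U, f i
      = ∑ i with U ⊆ s i, ∑ Q ∈ (S \ U).powerset with Q ⊆ s i, (-1) ^ #Q * f i := by
        simp_rw [← sum_mul, hincl, ite_mul, one_mul, zero_mul]
        rw [← sum_filter, filter_filter]
        congr 1
        ext i
        simp only [mem_filter, mem_univ, true_and, ← disjoint_iff_inter_eq_empty, disjoint_left]
        grind
    _ = ∑ Q ∈ (S \ U).powerset, (-1) ^ #Q * upSum s f (U ∪ Q) := by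
        simp_rw [upSum, mul_sum]
        refine sum_comm' fun i Q ↦ ?_
        simp only [mem_filter, mem_univ, true_and, union_subset_iff]
        tauto
    _ = (-1) ^ #(S \ U) * upSum s f S := by
        rw [sum_eq_single (S \ U), union_sdiff_of_subset hU]
        · intro Q hQ hne
          rw [h0, mul_zero]
          have hQS := mem_powerset.1 hQ
          grind
        · simp

lemma sum_mul_inter_of_upSum_eq_zero (h0 : ∀ Q ⊂ S, upSum s f Q = 0) (p : Finset α → R) :
    ∑ i, f i * p (s i ∩ S) = alternatingSum p S * upSum s f S := by
  rw [← sum_fiberwise_of_maps_to (t := S.powerset) (g := fun i ↦ s i ∩ S)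
    (by simp [inter_subset_right]), alternatingSum, sum_mul]
  refine sum_congr rfl fun U hU ↦ ?_
  rw [mul_right_comm, ← sum_filter_inter_eq_of_upSum_eq_zero h0 (mem_powerset.1 hU), sum_mul]
  exact sum_congr rfl fun i hi ↦ by rw [(mem_filter.1 hi).2]

lemma eigenvalue_mul_alternatingSum [IsDomain R] {T : Matrix ι ι R} (hT : T.IsSymm) {μ : R}
    (hf : T *ᵥ f = μ • f) (h0 : ∀ Q ⊂ S, upSum s f Q = 0) (hS : upSum s f S ≠ 0)
    {p q : Finset α → R}
    (hpq : T *ᵥ (fun i ↦ p (s i ∩ S)) = fun i ↦ q (s i ∩ S)) :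
    μ * alternatingSum p S = alternatingSum q S := by
  refine mul_right_cancel₀ hS ?_
  calc μ * alternatingSum p S * upSum s f S = (T *ᵥ f) ⬝ᵥ fun i ↦ p (s i ∩ S) := by
        rw [mul_assoc, ← sum_mul_inter_of_upSum_eq_zero h0, hf, smul_dotProduct, smul_eq_mul]
        rfl
    _ = f ⬝ᵥ T *ᵥ (fun i ↦ p (s i ∩ S)) := by
        rw [dotProduct_mulVec, ← mulVec_transpose, hT]
    _ = alternatingSum q S * upSum s f S := by
        rw [hpq, ← sum_mul_inter_of_upSum_eq_zero h0]
        rfl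

end MinimalUpSum

section HoffmanBound

variable {V : Type*} [Fintype V] {T : Matrix V V ℝ} {d τ : ℝ}

lemma posSemidef_add_smul_one_sub [DecidableEq V] [Nonempty V] (hT : T.IsSymm)
    (hd : ∀ v, ∑ w, T v w = d)
    (hτ : ∀ f ≠ 0, ∑ v, f v = 0 → ∀ μ : ℝ, T *ᵥ f = μ • f → -τ ≤ μ) :
    (T + τ • (1 : Matrix V V ℝ) - ((d + τ) / Fintype.card V) • Matrix.of 1).PosSemidef := by
  set M := T + τ • (1 : Matrix V V ℝ) - ((d + τ) / Fintype.card V) • Matrix.of 1 with hM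
  have hMsymm : M.IsHermitian := by
    ext v w
    simp [hM, hT.apply, one_apply, eq_comm]
  have hMmul (f : V → ℝ) :
      M *ᵥ f = T *ᵥ f + τ • f - fun _ ↦ (d + τ) / Fintype.card V * ∑ v, f v := by
    rw [hM, sub_mulVec, add_mulVec, smul_mulVec, smul_mulVec, one_mulVec]
    ext v
    simp [mulVec, dotProduct]
  have hMone : M *ᵥ 1 = 0 := by
    rw [hMmul]
    ext v
    simp [mulVec, dotProduct, hd]
  rw [hMsymm.posSemidef_iff_eigenvalues_nonneg]
  intro i
  set f : V → ℝ := ⇑(hMsymm.eigenvectorBasis i)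
  set μ := hMsymm.eigenvalues i
  have hf : M *ᵥ f = μ • f := hMsymm.mulVec_eigenvectorBasis i
  have hf0 : f ≠ 0 := fun h0 ↦
    hMsymm.eigenvectorBasis.orthonormal.ne_zero i (by ext x; exact congrFun h0 x)
  by_cases hsum : ∑ v, f v = 0
  · have hTf : T *ᵥ f = (μ - τ) • f := by
      rw [sub_smul, ← hf, hMmul, hsum]
      ext
      simp
    have hle := hτ f hf0 hsum _ hTf
    rw [Pi.zero_apply]
    linarith
  · have hμ : μ * ∑ v, f v = 0 := by
      calc μ * ∑ v, f v = 1 ⬝ᵥ M *ᵥ f := by rw [hf, dotProduct_smul, one_dotProduct, smul_eq_mul]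
        _ = (M *ᵥ 1) ⬝ᵥ f := by
          rw [dotProduct_mulVec, ← mulVec_transpose, ← conjTranspose_eq_transpose_of_trivial,
            hMsymm]
        _ = 0 := by rw [hMone, zero_dotProduct]
    exact ((mul_eq_zero.1 hμ).resolve_right hsum).ge

theorem hoffman_bound (hT : T.IsSymm) (hd : ∀ v, ∑ w, T v w = d)
    (hτ : ∀ f ≠ 0, ∑ v, f v = 0 → ∀ μ : ℝ, T *ᵥ f = μ • f → -τ ≤ μ) {F : Finset V}
    (hF : F.Nonempty) {δ : ℝ} (hδ : ∀ v ∈ F, ∑ w ∈ F, T v w ≤ δ) :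
    (d + τ) * #F ≤ (δ + τ) * Fintype.card V := by
  classical
  have : Nonempty V := ⟨hF.choose⟩
  have hV : (0 : ℝ) < Fintype.card V := by exact_mod_cast Fintype.card_pos
  have hF' : (0 : ℝ) < #F := by exact_mod_cast hF.card_pos
  set x : V → ℝ := fun v ↦ if v ∈ F then 1 else 0
  have hquad := (posSemidef_add_smul_one_sub hT hd hτ).dotProduct_mulVec_nonneg x
  have hTx : x ⬝ᵥ T *ᵥ x = ∑ v ∈ F, ∑ w ∈ F, T v w := by
    simp [x, mulVec, dotProduct]
  have hle : x ⬝ᵥ T *ᵥ x ≤ #F * δ := by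
    rw [hTx, ← nsmul_eq_mul]
    exact sum_le_card_nsmul _ _ _ hδ
  have hxx : x ⬝ᵥ x = #F := by simp [x, dotProduct]
  have hx1 : x ⬝ᵥ (Matrix.of 1 : Matrix V V ℝ) *ᵥ x = #F * #F := by
    simp [x, mulVec, dotProduct]
  simp only [star_trivial, sub_mulVec, add_mulVec, smul_mulVec, one_mulVec, dotProduct_sub,
    dotProduct_add, dotProduct_smul, smul_eq_mul, hxx, hx1] at hquad
  have hdensity : (d + τ) / Fintype.card V * (#F * #F) ≤ (δ + τ) * #F := by linarith
  rw [div_mul_eq_mul_div, div_le_iff₀ hV] at hdensity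
  exact le_of_mul_le_mul_right (by linarith) hF'

end HoffmanBound

section AlternatingSum

variable {α R : Type*} [DecidableEq α] {S : Finset α}

lemma alternatingSum_neg_one_pow_card [CommRing R] (S : Finset α) :
    alternatingSum (fun U ↦ (-1 : R) ^ #U) S = (-2) ^ #S := by
  rw [show (-2 : R) = -1 + -1 by ring, ← sum_pow_mul_eq_add_pow, alternatingSum]
  refine sum_congr rfl fun U hU ↦ ?_
  rw [card_sdiff_of_subset (mem_powerset.1 hU), mul_comm]

lemma alternatingSum_ite_eq [Ring R] (S : Finset α) :
    alternatingSum (fun U ↦ if U = S then (1 : R) else 0) S = 1 := by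
  simp [alternatingSum]

lemma alternatingSum_ite_card_eq [CommRing R] (S : Finset α) (k : ℕ) :
    alternatingSum (fun U ↦ if #U = k then (1 : R) else 0) S =
      (-1) ^ (#S - k) * (#S).choose k := by
  simp only [alternatingSum, mul_ite, mul_one, mul_zero]
  rw [← sum_filter, ← powersetCard_eq_filter, ← card_powersetCard, mul_comm, ← nsmul_eq_mul]
  refine sum_eq_card_nsmul fun U hU ↦ ?_
  obtain ⟨hUS, rfl⟩ := mem_powersetCard.1 hU
  rw [card_sdiff_of_subset hUS]

lemma two_mul_abs_alternatingSum_le (hS : S.Nonempty) {q : Finset α → ℝ} {c : ℝ}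
    (hodd : ∀ U ⊆ S, Odd #U → q U = 0) (hc : ∀ U ⊆ S, |q U| ≤ c) :
    2 * |alternatingSum q S| ≤ 2 ^ #S * c := by
  have hterm (U : Finset α) (hU : U ⊆ S) : 2 * |q U| ≤ (1 + (-1) ^ #U) * c := by
    rcases Nat.even_or_odd #U with heven | hoddU
    · rw [heven.neg_one_pow]
      linarith [hc U hU]
    · simp [hodd U hU hoddU, hoddU.neg_one_pow]
  have hsum : ∑ U ∈ S.powerset, (-1 : ℝ) ^ #U = 0 := by
    exact_mod_cast sum_powerset_neg_one_pow_card_of_nonempty hS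
  calc 2 * |alternatingSum q S|
      ≤ 2 * ∑ U ∈ S.powerset, |q U| := by
        gcongr
        refine (abs_sum_le_sum_abs _ _).trans_eq ?_
        simp [abs_mul]
    _ ≤ ∑ U ∈ S.powerset, (1 + (-1) ^ #U) * c := by
        rw [mul_sum]
        exact sum_le_sum fun U hU ↦ hterm U (mem_powerset.1 hU)
    _ = 2 ^ #S * c := by
        rw [← sum_mul, sum_add_distrib, hsum]
        simp

end AlternatingSum

section HalfIntersection

variable {α : Type*} [DecidableEq α] {Y S : Finset α} {k : ℕ}

/-- Adjacency matrix of the graph on the `2k`-subsets of `Y` joining sets that meet in exactly `k`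
points, equivalently sets whose symmetric difference is again a `2k`-set. -/
def halfIntersectionMatrix (Y : Finset α) (k : ℕ) :
    Matrix (Y.powersetCard (2 * k)) (Y.powersetCard (2 * k)) ℝ :=
  of fun A B ↦ if #(A.1 ∩ B.1) = k then 1 else 0

lemma halfIntersectionMatrix_isSymm : (halfIntersectionMatrix Y k).IsSymm :=
  IsSymm.ext fun A B ↦ by simp [halfIntersectionMatrix, inter_comm]

lemma halfIntersectionMatrix_mulVec (g : Finset α → ℝ) (A : Y.powersetCard (2 * k)) :
    (halfIntersectionMatrix Y k *ᵥ fun B ↦ g B) A =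
      ∑ B ∈ Y.powersetCard (2 * k) with #(A.1 ∩ B) = k, g B := by
  simp only [halfIntersectionMatrix, mulVec, dotProduct, of_apply, ite_mul, one_mul, zero_mul]
  rw [sum_filter]
  exact sum_coe_sort (Y.powersetCard (2 * k)) fun B ↦ if #(A.1 ∩ B) = k then g B else 0

lemma card_powersetCard_card_inter_eq_half (hY : #Y = 4 * k) {A : Finset α}
    (hA : A ∈ Y.powersetCard (2 * k)) :
    #{B ∈ Y.powersetCard (2 * k) | #(A ∩ B) = k} = (2 * k).choose k ^ 2 := by
  obtain ⟨hAY, hAk⟩ := mem_powersetCard.1 hA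
  have hcard := card_powersetCard_card_inter_eq hAY k k
  rwa [← two_mul, hAk, hY, show 4 * k - 2 * k = 2 * k by omega, ← sq] at hcard

lemma sum_halfIntersectionMatrix (hY : #Y = 4 * k) (A : Y.powersetCard (2 * k)) :
    ∑ B, halfIntersectionMatrix Y k A B = ((2 * k).choose k : ℝ) ^ 2 := by
  have hrow := halfIntersectionMatrix_mulVec (fun _ ↦ 1) A
  simp only [mulVec, dotProduct, mul_one, sum_const, nsmul_eq_mul,
    card_powersetCard_card_inter_eq_half hY A.2] at hrow
  exact_mod_cast hrow

lemma halfIntersectionMatrix_mulVec_neg_one_pow (hY : #Y = 4 * k) (hS : S ⊆ Y) :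
    (halfIntersectionMatrix Y k *ᵥ fun B ↦ (-1) ^ #(B.1 ∩ S)) = fun A ↦
      krawtchouk (2 * k) k #(A.1 ∩ S) * krawtchouk (2 * k) k (#S - #(A.1 ∩ S)) := by
  ext A
  obtain ⟨hAY, hA⟩ := mem_powersetCard.1 A.2
  have hsplit (B : Finset α) :
      (-1 : ℝ) ^ #(B ∩ S) = (-1) ^ #(A.1 ∩ B ∩ S) * (-1) ^ #((B \ A.1) ∩ S) := by
    rw [← pow_add, ← card_inter_add_card_sdiff (B ∩ S) A.1, sdiff_inter_right_comm,
      inter_comm (B ∩ S), inter_assoc]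
  have hcompl : #((Y \ A.1) ∩ S) = #S - #(A.1 ∩ S) := by
    rw [← card_sdiff, sdiff_inter_right_comm, inter_eq_right.2 hS]
  have hprod := sum_powersetCard_card_inter_eq_mul hAY k k (fun C ↦ (-1 : ℝ) ^ #(C ∩ S))
    (fun D ↦ (-1) ^ #(D ∩ S))
  rw [← two_mul] at hprod
  rw [halfIntersectionMatrix_mulVec (fun B ↦ (-1) ^ #(B ∩ S)), sum_congr rfl fun B _ ↦ hsplit B,
    hprod, sum_powersetCard_neg_one_pow_card_inter, sum_powersetCard_neg_one_pow_card_inter,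
    card_sdiff_of_subset hAY, hA, hY, hcompl, show 4 * k - 2 * k = 2 * k by omega]

lemma halfIntersectionMatrix_mulVec_ite_eq (hS : S ∈ Y.powersetCard (2 * k)) :
    (halfIntersectionMatrix Y k *ᵥ fun B ↦ if B.1 ∩ S = S then 1 else 0) = fun A ↦
      if #(A.1 ∩ S) = k then 1 else 0 := by
  ext A
  have hiff (B : Y.powersetCard (2 * k)) : B.1 ∩ S = S ↔ B = ⟨S, hS⟩ := by
    have hB := (mem_powersetCard.1 B.2).2
    have hS' := (mem_powersetCard.1 hS).2
    rw [inter_eq_right, Subtype.ext_iff]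
    exact ⟨fun h ↦ (eq_of_subset_of_card_le h (by omega)).symm, fun h ↦ h ▸ subset_rfl⟩
  simp [hiff, mulVec, dotProduct, halfIntersectionMatrix]

variable {f : Y.powersetCard (2 * k) → ℝ} {μ : ℝ}

lemma abs_eigenvalue_halfIntersectionMatrix_le_of_card_eq
    (hf : halfIntersectionMatrix Y k *ᵥ f = μ • f) (hSY : S ⊆ Y) (hSk : #S = 2 * k)
    (hS : upSum Subtype.val f S ≠ 0) (hmin : ∀ Q ⊂ S, upSum Subtype.val f Q = 0) :
    (4 * k - 2) * |μ| ≤ ((2 * k).choose k : ℝ) ^ 2 := by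
  have hμ := eigenvalue_mul_alternatingSum halfIntersectionMatrix_isSymm hf hmin hS
    (p := fun U ↦ if U = S then 1 else 0) (q := fun U ↦ if #U = k then 1 else 0)
    (halfIntersectionMatrix_mulVec_ite_eq (mem_powersetCard.2 ⟨hSY, hSk⟩))
  rw [alternatingSum_ite_eq, alternatingSum_ite_card_eq, mul_one, hSk] at hμ
  have hbinom : (4 * k : ℝ) ≤ (2 * k).choose k + 2 :=
    mod_cast four_mul_le_centralBinom_add_two k
  rw [hμ, abs_mul, abs_pow, abs_neg, abs_one, one_pow, one_mul, Nat.abs_cast, sq]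
  gcongr
  linarith

lemma abs_eigenvalue_halfIntersectionMatrix_le_of_card_lt (hY : #Y = 4 * k)
    (hf : halfIntersectionMatrix Y k *ᵥ f = μ • f) (hSY : S ⊆ Y) (hSne : S.Nonempty)
    (hSk : #S < 2 * k) (hS : upSum Subtype.val f S ≠ 0)
    (hmin : ∀ Q ⊂ S, upSum Subtype.val f Q = 0) :
    (4 * k - 2) * |μ| ≤ ((2 * k).choose k : ℝ) ^ 2 := by
  set q : Finset α → ℝ := fun U ↦ krawtchouk (2 * k) k #U * krawtchouk (2 * k) k (#S - #U)
  have hμ : μ * (-2) ^ #S = alternatingSum q S := by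
    rw [← alternatingSum_neg_one_pow_card]
    exact eigenvalue_mul_alternatingSum halfIntersectionMatrix_isSymm hf hmin hS
      (halfIntersectionMatrix_mulVec_neg_one_pow hY hSY)
  have hcard_pos := hSne.card_pos
  have hk : (0 : ℝ) < 2 * k - 1 := by
    rw [sub_pos]
    exact_mod_cast (by omega : 1 < 2 * k)
  have hq_odd (U : Finset α) (hU : U ⊆ S) (hodd : Odd #U) : q U = 0 := by
    simp only [q, krawtchouk_middle_of_odd ((card_le_card hU).trans_lt hSk) hodd, zero_mul]
  have hq_le (U : Finset α) (hU : U ⊆ S) :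
      |q U| ≤ ((2 * k).choose k : ℝ) ^ 2 / (2 * k - 1) := by
    have hcard := card_le_card hU
    rw [le_div_iff₀' hk]
    exact two_mul_sub_one_mul_abs_krawtchouk_middle_mul_le (by omega) (by omega)
  have hbound := two_mul_abs_alternatingSum_le hSne hq_odd hq_le
  rw [← hμ, abs_mul, abs_pow, abs_neg, abs_two] at hbound
  have hμle : 2 * |μ| ≤ ((2 * k).choose k : ℝ) ^ 2 / (2 * k - 1) :=
    le_of_mul_le_mul_left (by linarith) (pow_pos two_pos #S)
  rw [le_div_iff₀ hk] at hμle
  linarith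

lemma abs_eigenvalue_halfIntersectionMatrix_le (hY : #Y = 4 * k) (hf0 : f ≠ 0)
    (hsum : ∑ A, f A = 0) (hf : halfIntersectionMatrix Y k *ᵥ f = μ • f) :
    (4 * k - 2) * |μ| ≤ ((2 * k).choose k : ℝ) ^ 2 := by
  obtain ⟨S, hSY, hSk, hS, hmin⟩ := exists_minimal_upSum_ne_zero hf0
  have hSne : S.Nonempty := by
    rw [nonempty_iff_ne_empty]
    rintro rfl
    exact hS (by simpa [upSum] using hsum)
  rcases hSk.eq_or_lt with hSk | hSk
  · exact abs_eigenvalue_halfIntersectionMatrix_le_of_card_eq hf hSY hSk hS hmin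
  · exact abs_eigenvalue_halfIntersectionMatrix_le_of_card_lt hY hf hSY hSne hSk hS hmin

end HalfIntersection

section TriangleFree

variable {α : Type*} [DecidableEq α] {Y A B : Finset α} {F : Finset (Finset α)} {k : ℕ}

/-- No three distinct members of `F` have empty triple symmetric difference, that is, no member
is the symmetric difference of two others. -/
def IsTriangleFree (F : Finset (Finset α)) : Prop :=
  ∀ A ∈ F, ∀ B ∈ F, ∀ C ∈ F, A ≠ B → A ≠ C → B ≠ C → symmDiff (symmDiff A B) C ≠ ∅

lemma IsTriangleFree.mono {G : Finset (Finset α)} (hfree : IsTriangleFree F) (hGF : G ⊆ F) :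
    IsTriangleFree G :=
  fun A hA B hB C hC ↦ hfree A (hGF hA) B (hGF hB) C (hGF hC)

lemma symmDiff_mem_filter_card_inter_eq (hA : A ∈ Y.powersetCard (2 * k))
    (hB : B ∈ Y.powersetCard (2 * k)) (hAB : #(A ∩ B) = k) :
    symmDiff A B ∈ {B ∈ Y.powersetCard (2 * k) | #(A ∩ B) = k} := by
  obtain ⟨hAY, hAk⟩ := mem_powersetCard.1 hA
  obtain ⟨hBY, hBk⟩ := mem_powersetCard.1 hB
  have hA_sdiff := card_inter_add_card_sdiff A B
  have hB_sdiff := card_inter_add_card_sdiff B A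
  rw [inter_comm] at hB_sdiff
  have hinter : A ∩ symmDiff A B = A \ B := by
    ext
    simp only [mem_inter, mem_symmDiff, mem_sdiff]
    tauto
  have hcard : #(symmDiff A B) = #(A \ B) + #(B \ A) :=
    card_union_of_disjoint disjoint_sdiff_sdiff
  refine mem_filter.2 ⟨mem_powersetCard.2 ⟨?_, by omega⟩, by rw [hinter]; omega⟩
  exact symmDiff_le_sup.trans (union_subset hAY hBY)

lemma IsTriangleFree.two_mul_card_filter_card_inter_le (hfree : IsTriangleFree F)
    (hF : F ⊆ Y.powersetCard (2 * k)) (hk : 0 < k) (hA : A ∈ F) :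
    2 * #{B ∈ F | #(A ∩ B) = k} ≤ #{B ∈ Y.powersetCard (2 * k) | #(A ∩ B) = k} := by
  set N := {B ∈ F | #(A ∩ B) = k} with hN
  have hdisj : Disjoint N (N.image (symmDiff A)) := by
    simp only [disjoint_right, mem_image, hN, mem_filter]
    rintro _ ⟨B, ⟨hB, hABk⟩, rfl⟩ ⟨hAB, -⟩
    have hA0 : A ≠ ∅ := by
      rintro rfl
      simp [hk.ne] at hABk
    have hB0 : B ≠ ∅ := by
      rintro rfl
      simp [hk.ne] at hABk
    refine hfree A hA B hB _ hAB ?_ ?_ ?_ (symmDiff_self _)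
    · rintro rfl
      have hAk := (mem_powersetCard.1 (hF hA)).2
      rw [inter_self] at hABk
      omega
    · exact fun h ↦ hB0 (symmDiff_eq_left.1 h.symm)
    · exact fun h ↦ hA0 (symmDiff_eq_right.1 h.symm)
  have hsub : N ∪ N.image (symmDiff A) ⊆ {B ∈ Y.powersetCard (2 * k) | #(A ∩ B) = k} := by
    refine union_subset (filter_subset_filter _ hF) (image_subset_iff.2 fun B hB ↦ ?_)
    obtain ⟨hB, hABk⟩ := mem_filter.1 hB
    exact symmDiff_mem_filter_card_inter_eq (hF hA) (hF hB) hABk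
  calc 2 * #N = #(N ∪ N.image (symmDiff A)) := by
        rw [card_union_of_disjoint hdisj, card_image_of_injective _ (symmDiff_right_injective A),
          two_mul]
    _ ≤ _ := card_le_card hsub

lemma IsTriangleFree.sum_halfIntersectionMatrix_le (hfree : IsTriangleFree F)
    (hF : F ⊆ Y.powersetCard (2 * k)) (hk : 0 < k) (hY : #Y = 4 * k)
    {A : Y.powersetCard (2 * k)} (hA : A.1 ∈ F) :
    ∑ B ∈ F.subtype (· ∈ Y.powersetCard (2 * k)), halfIntersectionMatrix Y k A B ≤
      ((2 * k).choose k : ℝ) ^ 2 / 2 := by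
  have hrow : ∑ B ∈ F.subtype (· ∈ Y.powersetCard (2 * k)), halfIntersectionMatrix Y k A B =
      #{B ∈ F | #(A.1 ∩ B) = k} := by
    rw [← sum_boole]
    exact sum_subtype_of_mem (fun B ↦ if #(A.1 ∩ B) = k then 1 else 0) hF
  have hhalf := hfree.two_mul_card_filter_card_inter_le hF hk hA
  rw [card_powersetCard_card_inter_eq_half hY A.2] at hhalf
  rw [hrow, le_div_iff₀' two_pos]
  exact_mod_cast hhalf

theorem IsTriangleFree.card_le_of_card_eq_four_mul (hfree : IsTriangleFree F)
    (hF : F ⊆ Y.powersetCard (2 * k)) (hk : 0 < k) (hY : #Y = 4 * k) :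
    (4 * k - 1) * #F ≤ 2 * k * (4 * k).choose (2 * k) := by
  rcases F.eq_empty_or_nonempty with rfl | ⟨A, hA⟩
  · simp
  have hk' : (0 : ℝ) < 4 * k - 2 := by
    rw [sub_pos]
    exact_mod_cast (by omega : 2 < 4 * k)
  set d : ℝ := ((2 * k).choose k : ℝ) ^ 2 with hd
  have hd0 : 0 < d := pow_pos (mod_cast Nat.choose_pos (by omega)) 2
  have hhoffman := hoffman_bound (T := halfIntersectionMatrix Y k) (τ := d / (4 * k - 2))
    (F := F.subtype (· ∈ Y.powersetCard (2 * k))) halfIntersectionMatrix_isSymm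
    (sum_halfIntersectionMatrix hY)
    (fun f hf0 hsum μ hf ↦ neg_le_of_abs_le <|
      (le_div_iff₀' hk').2 (abs_eigenvalue_halfIntersectionMatrix_le hY hf0 hsum hf))
    ⟨⟨A, hF hA⟩, mem_subtype.2 hA⟩
    (fun B hB ↦ hfree.sum_halfIntersectionMatrix_le hF hk hY (mem_subtype.1 hB))
  rw [card_subtype, filter_true_of_mem hF, Fintype.card_coe, card_powersetCard, hY, ← hd]
    at hhoffman
  have hreal : (4 * k - 1 : ℝ) * #F ≤ 2 * k * (4 * k).choose (2 * k) := by
    field_simp at hhoffman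
    linarith
  have hsub : ((4 * k - 1 : ℕ) : ℝ) = 4 * k - 1 := by
    rw [Nat.cast_sub (by omega)]
    norm_num
  rw [← hsub] at hreal
  exact_mod_cast hreal

lemma mul_card_le_mul_choose_of_forall_card_eq [Fintype α] {m M a b : ℕ} (hF : ∀ A ∈ F, #A = m)
    (hmM : m ≤ M) (hM : M ≤ Fintype.card α)
    (h : ∀ Y : Finset α, #Y = M → a * #{A ∈ F | A ⊆ Y} ≤ b * M.choose m) :
    a * #F ≤ b * (Fintype.card α).choose m := by
  have hcount : ∑ Y ∈ univ.powersetCard M, #{A ∈ F | A ⊆ Y} =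
      #F * (Fintype.card α - m).choose (M - m) := by
    rw [← smul_eq_mul, ← sum_const]
    refine (sum_card_bipartiteAbove_eq_sum_card_bipartiteBelow
      (fun A Y : Finset α ↦ A ⊆ Y)).symm.trans ?_
    refine sum_congr rfl fun A hA ↦ ?_
    rw [bipartiteAbove, card_filter_powersetCard_subset, hF A hA, card_univ]
    · exact subset_univ A
    · exact (hF A hA).trans_le hmM
  refine le_of_mul_le_mul_right ?_ (Nat.choose_pos (Nat.sub_le_sub_right hM m))
  calc a * #F * (Fintype.card α - m).choose (M - m)
      = ∑ Y ∈ univ.powersetCard M, a * #{A ∈ F | A ⊆ Y} := by rw [← mul_sum, hcount, mul_assoc]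
    _ ≤ ∑ _Y ∈ univ.powersetCard M, b * M.choose m :=
        sum_le_sum fun Y hY ↦ h Y (mem_powersetCard.1 hY).2
    _ = b * ((Fintype.card α).choose M * M.choose m) := by
        rw [sum_const, card_powersetCard, card_univ, smul_eq_mul, mul_left_comm]
    _ = b * (Fintype.card α).choose m * (Fintype.card α - m).choose (M - m) := by
        rw [Nat.choose_mul hmM, mul_assoc]

end TriangleFree

end FranklTriangle

/-- **Frankl's triangle problem, uniform version, large `n`.** Let `k ≥ 1` and `n ≥ 4k`.
If `F` is a family of `2k`-element subsets of an `n`-element ground set containing no three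
pairwise distinct members `A, B, C` with empty triple symmetric difference
`A ∆ B ∆ C = ∅`, then `(4k-1)·|F| ≤ 2k·C(n, 2k)`. -/
theorem frankl_triangle_uniform_large_n (k n : ℕ) (hk : 1 ≤ k) (hn : 4 * k ≤ n)
    (F : Finset (Finset (Fin n)))
    (hcard : ∀ A ∈ F, A.card = 2 * k)
    (hfree : ∀ A ∈ F, ∀ B ∈ F, ∀ C ∈ F, A ≠ B → A ≠ C → B ≠ C →
      symmDiff (symmDiff A B) C ≠ ∅) :
    (4 * k - 1) * F.card ≤ 2 * k * n.choose (2 * k) := by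
  have hfree : FranklTriangle.IsTriangleFree F := hfree
  have hslice (Y : Finset (Fin n)) (hY : Y.card = 4 * k) :
      (4 * k - 1) * (F.filter (· ⊆ Y)).card ≤ 2 * k * (4 * k).choose (2 * k) := by
    refine (hfree.mono (Finset.filter_subset _ F)).card_le_of_card_eq_four_mul
      (fun A hA ↦ ?_) hk hY
    obtain ⟨hAF, hAY⟩ := Finset.mem_filter.1 hA
    exact Finset.mem_powersetCard.2 ⟨hAY, hcard A hAF⟩
  simpa using FranklTriangle.mul_card_le_mul_choose_of_forall_card_eq hcard (by omega)
    (by simpa using hn) hslice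
end

section
/- Let n ≥ 1 and let p be a real number with 0 ≤ p ≤ 2/3. Let F be a family of subsets of {1,…,n} such that ∅ ∉ F and F contains no three pairwise distinct members A, B, C with empty triple symmetric difference A Δ B Δ C = ∅. Then μ_p(F) = Σ_{A∈F} p^{|A|}(1-p)^{n-|A|} ≤ max(p, 1/2). -/
/-!
Couple two `p`-biased random sets `A, B` so that, independently, each element lies in both, only in
`A`, or only in `B` with probability `p / 2` each. The triple `(A, B, A ∆ B)` is then exchangeable,
so a family `F` containing no triple of this form satisfies `2 ℙ(A ∈ F, B ∈ F) ≤ μ_p(F)`. On the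
other hand `ℙ(A ∈ F, B ∈ F)` is the noise stability of the indicator of `F` with correlation
`ρ = (1 - 2p) / (2 (1 - p))`. The noise operator has eigenvalues `ρ ^ k`; since `|ρ| ≤ 1`, each of
them is at least `m = min ρ 0`, and the constants have eigenvalue `1`, so the stability is at least
`μ_p(F)² + m (μ_p(F) - μ_p(F)²)`. Comparing the two bounds, as in Hoffman's ratio bound, gives
`μ_p(F) ≤ (1 - 2m) / (2 (1 - m))`, which is `1 / 2` for `m = 0` and `p` for `m = ρ`. The lower
bound on the stability is proved without Fourier analysis, by induction on the ground set,
splitting `f` into its average and its derivative in one coordinate.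
-/

namespace FranklTriangle

open Finset
open scoped symmDiff

variable {α : Type*} [DecidableEq α] {p ρ m : ℝ} {a : α} {S A B : Finset α} {f : Finset α → ℝ}

/-- The probability that a `p`-biased random subset of `S` equals `A`, for `A ⊆ S`. -/
def biasedWeight (p : ℝ) (S A : Finset α) : ℝ :=
  p ^ #A * (1 - p) ^ #(S \ A)

/-- The expectation of `f` at a `p`-biased random subset of `S`. -/
def biasedExpectation (p : ℝ) (S : Finset α) (f : Finset α → ℝ) : ℝ :=
  ∑ A ∈ S.powerset, biasedWeight p S A * f A

/-- The probability that a `ρ`-correlated pair of `p`-biased random subsets of `S` equals `(A, B)`,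
for `A, B ⊆ S`: the coordinates are independent, and the two indicators of each element have
correlation `ρ`. -/
def correlatedWeight (p ρ : ℝ) (S A B : Finset α) : ℝ :=
  ∏ i ∈ S,
    if i ∈ A ∧ i ∈ B then p ^ 2 + ρ * (p * (1 - p))
    else if i ∈ A ∨ i ∈ B then (1 - ρ) * (p * (1 - p))
    else (1 - p) ^ 2 + ρ * (p * (1 - p))

/-- The noise stability of `f`: the expectation of `f A * f B` over a `ρ`-correlated pair `(A, B)`
of `p`-biased random subsets of `S`. -/
def noiseStability (p ρ : ℝ) (S : Finset α) (f : Finset α → ℝ) : ℝ :=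
  ∑ A ∈ S.powerset, ∑ B ∈ S.powerset, correlatedWeight p ρ S A B * (f A * f B)

/-- The average of `f` over the presence of `a` in its argument, meant for sets not containing
`a`. -/
def averageAt (p : ℝ) (a : α) (f : Finset α → ℝ) (A : Finset α) : ℝ :=
  (1 - p) * f A + p * f (insert a A)

/-- The discrete derivative of `f` in the coordinate `a`, meant for sets not containing `a`. -/
def derivAt (a : α) (f : Finset α → ℝ) (A : Finset α) : ℝ :=
  f (insert a A) - f A

section Expectation

theorem biasedWeight_nonneg (hp0 : 0 ≤ p) (hp1 : p ≤ 1) (S A : Finset α) :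
    0 ≤ biasedWeight p S A :=
  mul_nonneg (pow_nonneg hp0 _) (pow_nonneg (sub_nonneg.2 hp1) _)

theorem biasedExpectation_nonneg (hp0 : 0 ≤ p) (hp1 : p ≤ 1) (S : Finset α) (hf : 0 ≤ f) :
    0 ≤ biasedExpectation p S f :=
  sum_nonneg fun A _ ↦ mul_nonneg (biasedWeight_nonneg hp0 hp1 S A) (hf A)

theorem biasedExpectation_empty (p : ℝ) (f : Finset α → ℝ) :
    biasedExpectation p ∅ f = f ∅ := by
  simp [biasedExpectation, biasedWeight]

theorem biasedWeight_insert_left (ha : a ∉ S) (hA : A ⊆ S) :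
    biasedWeight p (insert a S) A = (1 - p) * biasedWeight p S A := by
  have haSA : a ∉ S \ A := fun h ↦ ha (mem_sdiff.1 h).1
  rw [biasedWeight, biasedWeight, insert_sdiff_of_notMem S (notMem_mono hA ha),
    card_insert_of_notMem haSA]
  ring

theorem biasedWeight_insert_insert (ha : a ∉ S) (hA : A ⊆ S) :
    biasedWeight p (insert a S) (insert a A) = p * biasedWeight p S A := by
  rw [biasedWeight, biasedWeight, insert_sdiff_insert, sdiff_insert_of_notMem ha,
    card_insert_of_notMem (notMem_mono hA ha)]
  ring

theorem biasedExpectation_insert (ha : a ∉ S) (f : Finset α → ℝ) :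
    biasedExpectation p (insert a S) f = biasedExpectation p S (averageAt p a f) := by
  rw [biasedExpectation, biasedExpectation, sum_powerset_insert ha, ← sum_add_distrib]
  refine sum_congr rfl fun A hA ↦ ?_
  rw [biasedWeight_insert_left ha (mem_powerset.1 hA),
    biasedWeight_insert_insert ha (mem_powerset.1 hA), averageAt]
  ring

theorem biasedExpectation_sq_insert (ha : a ∉ S) (f : Finset α → ℝ) :
    biasedExpectation p (insert a S) (f ^ 2) =
      biasedExpectation p S (averageAt p a f ^ 2) +
        p * (1 - p) * biasedExpectation p S (derivAt a f ^ 2) := by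
  rw [biasedExpectation_insert ha]
  simp only [biasedExpectation, mul_sum, ← sum_add_distrib]
  refine sum_congr rfl fun A _ ↦ ?_
  simp only [averageAt, derivAt, Pi.pow_apply]
  ring

end Expectation

section Stability

theorem correlatedWeight_insert (ha : a ∉ S) (A B : Finset α) :
    correlatedWeight p ρ (insert a S) A B =
      (if a ∈ A ∧ a ∈ B then p ^ 2 + ρ * (p * (1 - p))
        else if a ∈ A ∨ a ∈ B then (1 - ρ) * (p * (1 - p))
        else (1 - p) ^ 2 + ρ * (p * (1 - p))) * correlatedWeight p ρ S A B :=
  prod_insert ha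

theorem correlatedWeight_comm (p ρ : ℝ) (S A B : Finset α) :
    correlatedWeight p ρ S A B = correlatedWeight p ρ S B A := by
  simp only [correlatedWeight, and_comm, or_comm]

theorem correlatedWeight_insert_of_notMem (ha : a ∉ S) (A B : Finset α) :
    correlatedWeight p ρ S (insert a A) B = correlatedWeight p ρ S A B := by
  refine prod_congr rfl fun i hi ↦ ?_
  simp only [mem_insert, ne_of_mem_of_not_mem hi ha, false_or]

theorem sum_sum_correlatedWeight_insert (ha : a ∉ S) (g : Finset α → Finset α → ℝ) :
    ∑ A ∈ (insert a S).powerset, ∑ B ∈ (insert a S).powerset,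
        correlatedWeight p ρ (insert a S) A B * g A B =
      ∑ A ∈ S.powerset, ∑ B ∈ S.powerset, correlatedWeight p ρ S A B *
        (((1 - p) ^ 2 + ρ * (p * (1 - p))) * g A B +
          (1 - ρ) * (p * (1 - p)) * (g (insert a A) B + g A (insert a B)) +
          (p ^ 2 + ρ * (p * (1 - p))) * g (insert a A) (insert a B)) := by
  simp only [sum_powerset_insert ha, ← sum_add_distrib]
  refine sum_congr rfl fun A hA ↦ sum_congr rfl fun B hB ↦ ?_
  have haA : a ∉ A := notMem_mono (mem_powerset.1 hA) ha
  have haB : a ∉ B := notMem_mono (mem_powerset.1 hB) ha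
  have weight_insert_right (A' : Finset α) :
      correlatedWeight p ρ S A' (insert a B) = correlatedWeight p ρ S A' B := by
    rw [correlatedWeight_comm, correlatedWeight_insert_of_notMem ha, correlatedWeight_comm]
  simp only [correlatedWeight_insert ha, weight_insert_right, correlatedWeight_insert_of_notMem ha,
    mem_insert_self, haA, haB, and_self, and_false, false_and, or_false, false_or, if_true,
    if_false]
  ring

theorem sum_sum_correlatedWeight_mul_left (p ρ : ℝ) (S : Finset α) (f : Finset α → ℝ) :
    ∑ A ∈ S.powerset, ∑ B ∈ S.powerset, correlatedWeight p ρ S A B * f A =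
      biasedExpectation p S f := by
  induction S using Finset.induction_on generalizing f with
  | empty => simp [biasedExpectation_empty, correlatedWeight]
  | insert a S ha ih =>
    rw [biasedExpectation_insert ha, sum_sum_correlatedWeight_insert ha fun A _ ↦ f A, ← ih]
    refine sum_congr rfl fun A _ ↦ sum_congr rfl fun B _ ↦ ?_
    rw [averageAt]
    ring

theorem noiseStability_empty (p ρ : ℝ) (f : Finset α → ℝ) :
    noiseStability p ρ ∅ f = f ∅ ^ 2 := by
  simp [noiseStability, correlatedWeight, sq]

theorem noiseStability_insert (ha : a ∉ S) (f : Finset α → ℝ) :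
    noiseStability p ρ (insert a S) f =
      noiseStability p ρ S (averageAt p a f) +
        p * (1 - p) * (ρ * noiseStability p ρ S (derivAt a f)) := by
  rw [noiseStability, sum_sum_correlatedWeight_insert ha fun A B ↦ f A * f B]
  simp only [noiseStability, mul_sum, ← sum_add_distrib]
  refine sum_congr rfl fun A _ ↦ sum_congr rfl fun B _ ↦ ?_
  simp only [averageAt, derivAt]
  ring

theorem abs_noiseStability_le (hp0 : 0 ≤ p) (hp1 : p ≤ 1) (hρ : |ρ| ≤ 1) (S : Finset α)
    (f : Finset α → ℝ) :
    |noiseStability p ρ S f| ≤ biasedExpectation p S (f ^ 2) := by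
  induction S using Finset.induction_on generalizing f with
  | empty => simp [noiseStability_empty, biasedExpectation_empty]
  | insert a S ha ih =>
    have hpq : 0 ≤ p * (1 - p) := mul_nonneg hp0 (sub_nonneg.2 hp1)
    have deriv_term : |ρ * noiseStability p ρ S (derivAt a f)| ≤
        biasedExpectation p S (derivAt a f ^ 2) := by
      rw [abs_mul]
      exact (mul_le_of_le_one_left (abs_nonneg _) hρ).trans (ih _)
    rw [noiseStability_insert ha, biasedExpectation_sq_insert ha]
    refine (abs_add_le _ _).trans (add_le_add (ih _) ?_)
    rw [abs_mul, abs_of_nonneg hpq]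
    exact mul_le_mul_of_nonneg_left deriv_term hpq

theorem le_noiseStability (hp0 : 0 ≤ p) (hp1 : p ≤ 1) (hρ : |ρ| ≤ 1) (hm0 : m ≤ 0) (hmρ : m ≤ ρ)
    (S : Finset α) (f : Finset α → ℝ) :
    m * biasedExpectation p S (f ^ 2) + (1 - m) * biasedExpectation p S f ^ 2 ≤
      noiseStability p ρ S f := by
  induction S using Finset.induction_on generalizing f with
  | empty =>
    simp only [noiseStability_empty, biasedExpectation_empty, Pi.pow_apply]
    linarith
  | insert a S ha ih =>
    have hpq : 0 ≤ p * (1 - p) := mul_nonneg hp0 (sub_nonneg.2 hp1)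
    have deriv_sq_nonneg : 0 ≤ biasedExpectation p S (derivAt a f ^ 2) :=
      biasedExpectation_nonneg hp0 hp1 S fun _ ↦ sq_nonneg _
    have deriv_term : m * biasedExpectation p S (derivAt a f ^ 2) ≤
        ρ * noiseStability p ρ S (derivAt a f) := by
      rcases le_total 0 ρ with hρ0 | hρ0
      · have deriv_lower : m * biasedExpectation p S (derivAt a f ^ 2) ≤
            noiseStability p ρ S (derivAt a f) :=
          (le_add_of_nonneg_right (mul_nonneg (by linarith) (sq_nonneg _))).trans (ih _)
        calc m * biasedExpectation p S (derivAt a f ^ 2)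
            ≤ ρ * (m * biasedExpectation p S (derivAt a f ^ 2)) :=
              le_mul_of_le_one_left (mul_nonpos_of_nonpos_of_nonneg hm0 deriv_sq_nonneg)
                (abs_le.1 hρ).2
          _ ≤ ρ * noiseStability p ρ S (derivAt a f) :=
              mul_le_mul_of_nonneg_left deriv_lower hρ0
      · calc m * biasedExpectation p S (derivAt a f ^ 2)
            ≤ ρ * biasedExpectation p S (derivAt a f ^ 2) :=
              mul_le_mul_of_nonneg_right hmρ deriv_sq_nonneg
          _ ≤ ρ * noiseStability p ρ S (derivAt a f) :=
              mul_le_mul_of_nonpos_left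
                (le_of_abs_le (abs_noiseStability_le hp0 hp1 hρ S _)) hρ0
    rw [noiseStability_insert ha, biasedExpectation_sq_insert ha, biasedExpectation_insert ha]
    linarith [ih (averageAt p a f), mul_le_mul_of_nonneg_left deriv_term hpq]

end Stability

section Triangle

/-- The correlation between two members of a random triangle `(A, B, A ∆ B)` of `p`-biased sets,
i.e. the solution `ρ` of `p ^ 2 + ρ * (p * (1 - p)) = p / 2` for `p ≠ 0, 1`. -/
noncomputable def triangleCorrelation (p : ℝ) : ℝ :=
  (1 - 2 * p) / (2 * (1 - p))

theorem triangleCorrelation_mul_one_sub (hp : p ≠ 1) :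
    triangleCorrelation p * (1 - p) = 1 / 2 - p := by
  have : 1 - p ≠ 0 := sub_ne_zero.2 hp.symm
  rw [triangleCorrelation]
  field_simp

theorem abs_triangleCorrelation_le_one (hp : p ≤ 3 / 4) : |triangleCorrelation p| ≤ 1 := by
  have : 0 < 2 * (1 - p) := by linarith
  rw [triangleCorrelation, abs_le, le_div_iff₀ this, div_le_one₀ this]
  constructor <;> linarith

theorem correlatedWeight_triangleCorrelation (hp : p ≠ 1) (S A B : Finset α) :
    correlatedWeight p (triangleCorrelation p) S A B =
      ∏ i ∈ S, if i ∈ A ∪ B then p / 2 else 1 - 3 * p / 2 := by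
  have hρ := triangleCorrelation_mul_one_sub hp
  have weight_both : p ^ 2 + triangleCorrelation p * (p * (1 - p)) = p / 2 := by
    linear_combination p * hρ
  have weight_one : (1 - triangleCorrelation p) * (p * (1 - p)) = p / 2 := by
    linear_combination -p * hρ
  have weight_none : (1 - p) ^ 2 + triangleCorrelation p * (p * (1 - p)) = 1 - 3 * p / 2 := by
    linear_combination p * hρ
  refine prod_congr rfl fun i _ ↦ ?_
  rw [weight_both, weight_one, weight_none]
  by_cases hA : i ∈ A <;> by_cases hB : i ∈ B <;> simp [hA, hB]

theorem correlatedWeight_triangleCorrelation_nonneg (hp0 : 0 ≤ p) (hp : p ≤ 2 / 3)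
    (S A B : Finset α) : 0 ≤ correlatedWeight p (triangleCorrelation p) S A B := by
  rw [correlatedWeight_triangleCorrelation (by linarith)]
  refine prod_nonneg fun i _ ↦ ?_
  split_ifs <;> linarith

theorem correlatedWeight_triangleCorrelation_symmDiff (hp : p ≠ 1) (S A B : Finset α) :
    correlatedWeight p (triangleCorrelation p) S A (A ∆ B) =
      correlatedWeight p (triangleCorrelation p) S A B := by
  have union_symmDiff : A ∪ A ∆ B = A ∪ B := by grind [Finset.mem_symmDiff]
  rw [correlatedWeight_triangleCorrelation hp, correlatedWeight_triangleCorrelation hp,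
    union_symmDiff]

theorem sum_sum_correlatedWeight_mul_symmDiff (hp : p ≠ 1) (S : Finset α) (f : Finset α → ℝ) :
    ∑ A ∈ S.powerset, ∑ B ∈ S.powerset,
        correlatedWeight p (triangleCorrelation p) S A B * (f A * f (A ∆ B)) =
      noiseStability p (triangleCorrelation p) S f := by
  refine sum_congr rfl fun A hA ↦ ?_
  have symmDiff_mem : ∀ B ∈ S.powerset, A ∆ B ∈ S.powerset := fun B hB ↦
    mem_powerset.2 (symmDiff_subset_union.trans
      (union_subset (mem_powerset.1 hA) (mem_powerset.1 hB)))
  refine sum_nbij' (A ∆ ·) (A ∆ ·) symmDiff_mem symmDiff_mem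
    (fun B _ ↦ symmDiff_symmDiff_cancel_left A B) (fun B _ ↦ symmDiff_symmDiff_cancel_left A B)
    fun B _ ↦ ?_
  rw [correlatedWeight_triangleCorrelation_symmDiff hp]

theorem two_mul_noiseStability_le (hp0 : 0 ≤ p) (hp : p ≤ 2 / 3) (S : Finset α)
    (hf : ∀ A B, f A * f B + f A * f (A ∆ B) ≤ f A) :
    2 * noiseStability p (triangleCorrelation p) S f ≤ biasedExpectation p S f := by
  calc 2 * noiseStability p (triangleCorrelation p) S f
      = ∑ A ∈ S.powerset, ∑ B ∈ S.powerset, correlatedWeight p (triangleCorrelation p) S A B *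
          (f A * f B + f A * f (A ∆ B)) := by
        simp only [mul_add, sum_add_distrib,
          sum_sum_correlatedWeight_mul_symmDiff (show p ≠ 1 by linarith)]
        rw [two_mul, noiseStability]
    _ ≤ ∑ A ∈ S.powerset, ∑ B ∈ S.powerset,
          correlatedWeight p (triangleCorrelation p) S A B * f A :=
        sum_le_sum fun A _ ↦ sum_le_sum fun B _ ↦ mul_le_mul_of_nonneg_left (hf A B)
          (correlatedWeight_triangleCorrelation_nonneg hp0 hp S A B)
    _ = biasedExpectation p S f := sum_sum_correlatedWeight_mul_left p _ S f

end Triangle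

section SymmDiffFree

variable {F : Finset (Finset α)}

/-- A family is symmetric-difference-free if it contains no triple `A, B, A ∆ B`, that is, if it is
independent in the triangle hypergraph. The sets `A` and `B` need not be distinct, so `∅ ∉ F` is
included as the case `A = B = ∅`. -/
def SymmDiffFree (F : Finset (Finset α)) : Prop :=
  ∀ A ∈ F, ∀ B ∈ F, A ∆ B ∉ F

theorem symmDiffFree_of_pairwise_ne (hempty : ∅ ∉ F)
    (hfree : ∀ A ∈ F, ∀ B ∈ F, ∀ C ∈ F, A ≠ B → A ≠ C → B ≠ C → A ∆ B ∆ C ≠ ∅) :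
    SymmDiffFree F := by
  intro A hA B hB hAB
  have ne_empty {C : Finset α} (hC : C ∈ F) : C ≠ ∅ := ne_of_mem_of_not_mem hC hempty
  refine hfree A hA B hB (A ∆ B) hAB ?_ ?_ ?_ (symmDiff_self _)
  · exact fun h ↦ ne_empty hAB (symmDiff_eq_bot.2 h)
  · exact fun h ↦ ne_empty hB (symmDiff_eq_left.1 h.symm)
  · exact fun h ↦ ne_empty hA (symmDiff_eq_right.1 h.symm)

theorem biasedExpectation_indicator [Fintype α] (p : ℝ) (F : Finset (Finset α)) :
    biasedExpectation p univ ((F : Set (Finset α)).indicator 1) =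
      ∑ A ∈ F, p ^ #A * (1 - p) ^ (Fintype.card α - #A) := by
  simp [biasedExpectation, biasedWeight, Set.indicator_apply, card_univ_sdiff]

theorem SymmDiffFree.indicator_mul_add_le (hF : SymmDiffFree F) (A B : Finset α) :
    (F : Set (Finset α)).indicator (1 : Finset α → ℝ) A * (F : Set (Finset α)).indicator 1 B +
        (F : Set (Finset α)).indicator 1 A * (F : Set (Finset α)).indicator 1 (A ∆ B) ≤
      (F : Set (Finset α)).indicator 1 A := by
  by_cases hA : A ∈ F
  · by_cases hB : B ∈ F
    · simp [hA, hB, hF A hA B hB]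
    · by_cases hAB : A ∆ B ∈ F <;> simp [hA, hB, hAB]
  · simp [hA]

theorem SymmDiffFree.biasedExpectation_indicator_le (hF : SymmDiffFree F) (hp0 : 0 ≤ p)
    (hp : p ≤ 2 / 3) (hm0 : m ≤ 0) (hm : m ≤ triangleCorrelation p) (S : Finset α) :
    2 * (1 - m) * biasedExpectation p S ((F : Set (Finset α)).indicator 1) ≤ 1 - 2 * m := by
  set f : Finset α → ℝ := (F : Set (Finset α)).indicator 1
  have hp1 : p ≤ 1 := by linarith
  have f_sq : f ^ 2 = f := by
    funext A
    by_cases hA : A ∈ F <;> simp [f, hA]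
  have upper : 2 * noiseStability p (triangleCorrelation p) S f ≤ biasedExpectation p S f :=
    two_mul_noiseStability_le hp0 hp S hF.indicator_mul_add_le
  have lower : m * biasedExpectation p S f + (1 - m) * biasedExpectation p S f ^ 2 ≤
      noiseStability p (triangleCorrelation p) S f := by
    simpa only [f_sq] using le_noiseStability hp0 hp1
      (abs_triangleCorrelation_le_one (by linarith)) hm0 hm S f
  have expectation_nonneg : 0 ≤ biasedExpectation p S f :=
    biasedExpectation_nonneg hp0 hp1 S (Set.indicator_nonneg fun _ _ ↦ zero_le_one)
  rcases expectation_nonneg.eq_or_lt with hzero | hpos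
  · rw [← hzero]
    linarith
  · refine le_of_mul_le_mul_right ?_ hpos
    linarith

theorem SymmDiffFree.sum_biased_le_max [Fintype α] (hF : SymmDiffFree F) (hp0 : 0 ≤ p)
    (hp : p ≤ 2 / 3) :
    ∑ A ∈ F, p ^ #A * (1 - p) ^ (Fintype.card α - #A) ≤ max p (1 / 2) := by
  rw [← biasedExpectation_indicator]
  rcases le_total p (1 / 2) with hhalf | hhalf
  · have correlation_nonneg : 0 ≤ triangleCorrelation p :=
      div_nonneg (by linarith) (by linarith)
    have ratio_bound := hF.biasedExpectation_indicator_le hp0 hp le_rfl correlation_nonneg univ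
    exact le_max_of_le_right (by linarith)
  · have correlation_nonpos : triangleCorrelation p ≤ 0 :=
      div_nonpos_of_nonpos_of_nonneg (by linarith) (by linarith)
    have ratio_bound := mul_le_mul_of_nonneg_left
      (hF.biasedExpectation_indicator_le hp0 hp correlation_nonpos le_rfl univ)
      (show 0 ≤ 1 - p by linarith)
    have hρ := triangleCorrelation_mul_one_sub (show p ≠ 1 by linarith)
    refine le_max_of_le_left ?_
    linear_combination ratio_bound +
      2 * (biasedExpectation p univ ((F : Set (Finset α)).indicator 1) - 1) * hρ

end SymmDiffFree

end FranklTriangle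

/-- **Frankl's triangle problem, `p`-biased version.** Let `0 ≤ p ≤ 2/3` and let `F` be a
family of subsets of an `n`-element ground set with `∅ ∉ F` and containing no three pairwise
distinct members `A, B, C` with empty triple symmetric difference `A ∆ B ∆ C = ∅`. Then the
`p`-biased measure `μ_p(F) = ∑_{A ∈ F} p^{|A|}(1-p)^{n-|A|}` is at most `max(p, 1/2)`. -/
theorem frankl_triangle_biased (n : ℕ) (hn : 1 ≤ n) (p : ℝ)
    (hp0 : 0 ≤ p) (hp1 : p ≤ 2 / 3)
    (F : Finset (Finset (Fin n)))
    (hempty : ∅ ∉ F)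
    (hfree : ∀ A ∈ F, ∀ B ∈ F, ∀ C ∈ F, A ≠ B → A ≠ C → B ≠ C →
      symmDiff (symmDiff A B) C ≠ ∅) :
    ∑ A ∈ F, p ^ A.card * (1 - p) ^ (n - A.card) ≤ max p (1 / 2) := by
  simpa only [Fintype.card_fin] using
    (FranklTriangle.symmDiffFree_of_pairwise_ne hempty hfree).sum_biased_le_max hp0 hp1
end
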